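/- There exists a universal constant C > 0 such that the following holds. Let X be an isotropic random vector in ℝⁿ with log-concave density which is ψ_α (α ∈ [1,2]) with constant b_α, and let A be an n×n real matrix with ‖A‖_HS² = n. Set ñ := n/(‖A‖_op²·b_α²). Then the thin-shell width satisfies √(Var(|AX|)) ≤ C·n^{1/2}·ñ^{−α/(2(2+α))}. -/

import Mathlib

open MeasureTheory ProbabilityTheory Real
open scoped ENNReal RealInnerProductSpace Pointwise NNReal

noncomputable section

/-- A nonnegative function is log-concave if `f(λx+(1-λ)y) ≥ f(x)^λ f(y)^{1-λ}`. -/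
def IsLogConcaveFn {E : Type*} [AddCommGroup E] [Module ℝ E] (f : E → ℝ) : Prop :=
  (∀ x, 0 ≤ f x) ∧
  ∀ x y : E, ∀ l : ℝ, 0 ≤ l → l ≤ 1 →
    f x ^ l * f y ^ (1 - l) ≤ f (l • x + (1 - l) • y)

/-- Hilbert-Schmidt (Frobenius) norm of a matrix. -/
def hsNorm {n : ℕ} (A : Matrix (Fin n) (Fin n) ℝ) : ℝ :=
  Real.sqrt (∑ i, ∑ j, (A i j) ^ 2)

/-- Operator norm of a matrix acting on Euclidean space. -/
def opNorm {n : ℕ} (A : Matrix (Fin n) (Fin n) ℝ) : ℝ :=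
  ‖LinearMap.toContinuousLinearMap (Matrix.toEuclideanLin A)‖

/-- Application of a matrix to a Euclidean vector. -/
def mApp {n : ℕ} (A : Matrix (Fin n) (Fin n) ℝ) (x : EuclideanSpace ℝ (Fin n)) :
    EuclideanSpace ℝ (Fin n) := Matrix.toEuclideanLin A x

/-- The random vector `X` has density `f` with respect to Lebesgue measure. -/
def HasDensityFn {Ω : Type*} [MeasurableSpace Ω] (P : Measure Ω) {n : ℕ}
    (X : Ω → EuclideanSpace ℝ (Fin n)) (f : EuclideanSpace ℝ (Fin n) → ℝ) : Prop :=
  Measurable X ∧ Measure.map X P = volume.withDensity fun x => ENNReal.ofReal (f x)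

/-- `X` is isotropic: centered with identity covariance. -/
def Isotropic {Ω : Type*} [MeasurableSpace Ω] (P : Measure Ω) {n : ℕ}
    (X : Ω → EuclideanSpace ℝ (Fin n)) : Prop :=
  (∫ ω, X ω ∂P) = 0 ∧
  ∀ θ η : EuclideanSpace ℝ (Fin n), (∫ ω, ⟪X ω, θ⟫ * ⟪X ω, η⟫ ∂P) = ⟪θ, η⟫

/-- `X` is ψ_α with constant `b`. -/
def IsPsiAlpha {Ω : Type*} [MeasurableSpace Ω] (P : Measure Ω) {n : ℕ}
    (X : Ω → EuclideanSpace ℝ (Fin n)) (α b : ℝ) : Prop :=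
  ∀ p : ℝ, 2 ≤ p → ∀ y : EuclideanSpace ℝ (Fin n),
    (∫ ω, |⟪X ω, y⟫| ^ p ∂P) ^ (1/p) ≤ b * p ^ (1/α) * (∫ ω, ⟪X ω, y⟫ ^ 2 ∂P) ^ ((1:ℝ)/2)

/-- `G` is a standard Gaussian random vector in `ℝⁿ`. -/
def IsStdGaussian {Ω : Type*} [MeasurableSpace Ω] (P : Measure Ω) {n : ℕ}
    (G : Ω → EuclideanSpace ℝ (Fin n)) : Prop :=
  Measurable G ∧
  Measure.map G P = volume.withDensity fun x =>
    ENNReal.ofReal ((2 * π) ^ (-(n:ℝ)/2) * Real.exp (-‖x‖ ^ 2 / 2))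

/-- Surface area of the unit sphere `S^{k-1}` in `ℝᵏ`. -/
def sphereVol (k : ℕ) : ℝ := 2 * π ^ ((k : ℝ)/2) / Real.Gamma ((k : ℝ)/2)

/-- The marginal density `π_F g(x) = ∫_{F^⊥} g(x+y) dy`. -/
def marginalDensity {n : ℕ} (g : EuclideanSpace ℝ (Fin n) → ℝ)
    (F : Submodule ℝ (EuclideanSpace ℝ (Fin n))) (x : EuclideanSpace ℝ (Fin n)) : ℝ :=
  ∫ y : Fᗮ, g (x + y)

/-- `h_{k,p}(u) = vol(S^{k-1}) ∫₀^∞ t^{p+k-1} π_{u(E₀)} g(t u(θ₀)) dt`. -/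
def hkp {n : ℕ} (g : EuclideanSpace ℝ (Fin n) → ℝ)
    (E₀ : Submodule ℝ (EuclideanSpace ℝ (Fin n))) (θ₀ : EuclideanSpace ℝ (Fin n))
    (k : ℕ) (p : ℝ) (u : Matrix (Fin n) (Fin n) ℝ) : ℝ :=
  sphereVol k * ∫ t in Set.Ioi (0:ℝ), t ^ (p + (k:ℝ) - 1) *
    marginalDensity g (Submodule.map (Matrix.toEuclideanLin u) E₀) (t • mApp u θ₀)

/-- Support functional of the one-sided L_q-centroid body `Z⁺_q(w)`. -/
def suppZplus {m : ℕ} (w : EuclideanSpace ℝ (Fin m) → ℝ) (q : ℝ)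
    (y : EuclideanSpace ℝ (Fin m)) : ℝ :=
  (2 * ∫ x, (max ⟪x, y⟫ 0) ^ q * w x) ^ (1/q)

/-- Ball's body `K_q(w) = {x : q ∫₀^∞ t^{q-1} w(tx) dt ≥ 1}`. -/
def ballBody {m : ℕ} (w : EuclideanSpace ℝ (Fin m) → ℝ) (q : ℝ) :
    Set (EuclideanSpace ℝ (Fin m)) :=
  {x | 1 ≤ q * ∫ t in Set.Ioi (0:ℝ), t ^ (q-1) * w (t • x)}

/-- The one-sided L_q-centroid body `Z⁺_q(w)`, as the convex set with support
functional `suppZplus w q`. -/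
def ZplusBody {m : ℕ} (w : EuclideanSpace ℝ (Fin m) → ℝ) (q : ℝ) :
    Set (EuclideanSpace ℝ (Fin m)) :=
  {x | ∀ y, ⟪x, y⟫ ≤ suppZplus w q y}

theorem ennreal_amgm {P Q R : ℝ≥0∞} (main : P + Q ≤ 2 * R) : P * Q ≤ R ^ 2 := by
  by_cases hR : R = ∞
  · simp [hR]
  have hPQ : P + Q ≠ ∞ := ne_top_of_le_ne_top (ENNReal.mul_ne_top (by simp) hR) main
  have hPt : P ≠ ∞ := fun h => hPQ (by simp [h])
  have hQt : Q ≠ ∞ := fun h => hPQ (by simp [h])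
  lift P to ℝ≥0 using hPt
  lift Q to ℝ≥0 using hQt
  lift R to ℝ≥0 using hR
  norm_cast at main ⊢
  rw [← NNReal.coe_le_coe] at main ⊢
  push_cast at main ⊢
  nlinarith [sq_nonneg ((P:ℝ) - Q), P.2, Q.2, R.2, sq_nonneg ((P:ℝ)+Q),
    mul_self_le_mul_self (by positivity : (0:ℝ) ≤ P + Q) main]

/-- One-dimensional Brunn-Minkowski inequality for midpoints. -/
theorem bm_one {U V W : Set ℝ} (hU : MeasurableSet U) (hV : MeasurableSet V)
    (hUn : U.Nonempty) (hVn : V.Nonempty)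
    (h : ∀ x ∈ U, ∀ y ∈ V, (x + y) / 2 ∈ W) :
    volume U + volume V ≤ 2 * volume W := by
  -- compact case
  have key : ∀ K L : Set ℝ, IsCompact K → IsCompact L → K.Nonempty → L.Nonempty →
      K ⊆ U → L ⊆ V → volume K + volume L ≤ 2 * volume W := by
    intro K L hK hL hKn hLn hKU hLV
    obtain ⟨a, haK, ha⟩ := hK.exists_isGreatest hKn
    obtain ⟨b, hbL, hb⟩ := hL.exists_isLeast hLn
    have h1 : volume ((fun x => x + b) '' K ∪ (fun y => a + y) '' L) ≤ 2 * volume W := by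
      have : (fun x => x + b) '' K ∪ (fun y => a + y) '' L ⊆ (2:ℝ) • W := by
        rintro z (⟨x, hx, rfl⟩ | ⟨y, hy, rfl⟩)
        · exact ⟨(x + b) / 2, h x (hKU hx) b (hLV hbL), by simp; ring⟩
        · exact ⟨(a + y) / 2, h a (hKU haK) y (hLV hy), by simp; ring⟩
      refine (measure_mono this).trans ?_
      rw [Measure.addHaar_smul]
      simp
    have h2 : volume ((fun x => x + b) '' K ∪ (fun y => a + y) '' L)
        = volume K + volume L := by
      rw [measure_union₀]
      · congr 1
        · rw [Set.image_add_right]; simp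
        · rw [Set.image_add_left]; simp
      · exact (hL.image (by fun_prop)).measurableSet.nullMeasurableSet
      · have : (fun x => x + b) '' K ∩ (fun y => a + y) '' L ⊆ {a + b} := by
          rintro z ⟨⟨x, hx, rfl⟩, ⟨y, hy, hxy⟩⟩
          have := ha hx
          have := hb hy
          simp only [Set.mem_singleton_iff] at *
          linarith
        exact measure_mono_null this (by simp)
    rw [← h2]; exact h1
  obtain ⟨u, hu⟩ := hUn
  obtain ⟨v, hv⟩ := hVn
  have e1 : volume U ≤ ⨆ (K : {K : Set ℝ // K ⊆ U ∧ IsCompact K}), volume K.1 := by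
    rw [hU.measure_eq_iSup_isCompact volume]
    refine iSup_le fun K => iSup_le fun h1 => iSup_le fun h2 => ?_
    exact le_iSup (fun K : {K : Set ℝ // K ⊆ U ∧ IsCompact K} => volume K.1) ⟨K, h1, h2⟩
  have e2 : volume V ≤ ⨆ (K : {K : Set ℝ // K ⊆ V ∧ IsCompact K}), volume K.1 := by
    rw [hV.measure_eq_iSup_isCompact volume]
    refine iSup_le fun K => iSup_le fun h1 => iSup_le fun h2 => ?_
    exact le_iSup (fun K : {K : Set ℝ // K ⊆ V ∧ IsCompact K} => volume K.1) ⟨K, h1, h2⟩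
  refine (add_le_add e1 e2).trans ?_
  have : Nonempty {K : Set ℝ // K ⊆ U ∧ IsCompact K} := ⟨⟨∅, by simp⟩⟩
  have : Nonempty {K : Set ℝ // K ⊆ V ∧ IsCompact K} := ⟨⟨∅, by simp⟩⟩
  refine ENNReal.iSup_add_iSup_le (fun K L => ?_)
  refine (add_le_add (measure_mono (Set.subset_insert u K.1))
    (measure_mono (Set.subset_insert v L.1))).trans ?_
  exact key _ _ (K.2.2.insert u) (L.2.2.insert v) (Set.insert_nonempty _ _)
    (Set.insert_nonempty _ _) (Set.insert_subset hu K.2.1) (Set.insert_subset hv L.2.1)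

/-- Prékopa-Leindler in dimension one, bounded real-valued case. -/
theorem pl_one_bdd {f g : ℝ → ℝ} {h : ℝ → ℝ≥0∞} (hf : Measurable f) (hg : Measurable g)
    (hh : Measurable h) (hf0 : ∀ x, 0 ≤ f x) (hg0 : ∀ x, 0 ≤ g x) (k : ℝ)
    (hfk : ∀ x, f x ≤ k) (hgk : ∀ x, g x ≤ k)
    (H : ∀ x y, ENNReal.ofReal (f x) * ENNReal.ofReal (g y) ≤ h ((x + y) / 2) ^ 2) :
    (∫⁻ x, ENNReal.ofReal (f x)) * (∫⁻ x, ENNReal.ofReal (g x)) ≤ (∫⁻ x, h x) ^ 2 := by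
  by_cases hfz : ∀ x, f x = 0
  · simp [hfz]
  by_cases hgz : ∀ x, g x = 0
  · simp [hgz]
  push Not at hfz hgz
  obtain ⟨x0, hx0⟩ := hfz
  obtain ⟨y0, hy0⟩ := hgz
  have hbf : BddAbove (Set.range f) := ⟨k, by rintro _ ⟨x, rfl⟩; exact hfk x⟩
  have hbg : BddAbove (Set.range g) := ⟨k, by rintro _ ⟨x, rfl⟩; exact hgk x⟩
  set a := ⨆ x, f x with ha
  set b := ⨆ x, g x with hb
  have ha0 : 0 < a := lt_of_lt_of_le (lt_of_le_of_ne (hf0 x0) (Ne.symm hx0)) (le_ciSup hbf x0)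
  have hb0 : 0 < b := lt_of_lt_of_le (lt_of_le_of_ne (hg0 y0) (Ne.symm hy0)) (le_ciSup hbg y0)
  -- layer cake
  have lc : ∀ (p : ℝ → ℝ), Measurable p → (∀ x, 0 ≤ p x) → (∀ x, p x ≤ 1) →
      ∫⁻ x, ENNReal.ofReal (p x) = ∫⁻ s in Set.Ioo (0:ℝ) 1, volume {x | s < p x} := by
    intro p hp hp0 hp1
    rw [lintegral_eq_lintegral_meas_lt volume (Filter.Eventually.of_forall hp0) hp.aemeasurable]
    rw [← Set.Ioo_union_Ici_eq_Ioi (zero_lt_one), lintegral_union measurableSet_Ici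
      (by rw [Set.disjoint_left]; rintro x ⟨_, h1⟩ h2; exact absurd h1 (not_lt.mpr h2))]
    have : ∫⁻ s in Set.Ici (1:ℝ), volume {x | s < p x} = 0 := by
      rw [setLIntegral_congr_fun measurableSet_Ici (g := fun _ => 0)]
      · simp
      · intro s hs
        have : {x | s < p x} = ∅ := by
          ext x; simp only [Set.mem_ofPred_eq, Set.mem_empty_iff_false, iff_false, not_lt]
          exact (hp1 x).trans hs
        simp [this]
    rw [this, add_zero]
  set c := Real.sqrt (a * b) with hc
  have hc0 : 0 < c := Real.sqrt_pos.mpr (mul_pos ha0 hb0)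
  have hcc : c * c = a * b := Real.mul_self_sqrt (by positivity)
  -- truncated h
  set q : ℝ → ℝ := fun x => (min (h x) (ENNReal.ofReal c)).toReal / c with hq
  have hqm : Measurable q := ((hh.min measurable_const).ennreal_toReal).div_const _
  have hq0 : ∀ x, 0 ≤ q x := fun x => by positivity
  have hfin : ∀ x, min (h x) (ENNReal.ofReal c) ≠ ∞ := fun x =>
    ne_top_of_le_ne_top ENNReal.ofReal_ne_top (min_le_right _ _)
  have hq1 : ∀ x, q x ≤ 1 := fun x => by
    rw [hq]; simp only
    rw [div_le_one hc0]
    calc _ ≤ (ENNReal.ofReal c).toReal :=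
          ENNReal.toReal_mono ENNReal.ofReal_ne_top (min_le_right _ _)
      _ = c := ENNReal.toReal_ofReal hc0.le
  have hqh : ∀ x, ENNReal.ofReal c * ENNReal.ofReal (q x) ≤ h x := fun x => by
    rw [← ENNReal.ofReal_mul hc0.le, hq]
    simp only
    rw [mul_div_cancel₀ _ hc0.ne', ENNReal.ofReal_toReal (hfin x)]
    exact min_le_left _ _
  have main : (∫⁻ x, ENNReal.ofReal (f x / a)) + (∫⁻ x, ENNReal.ofReal (g x / b))
      ≤ 2 * ∫⁻ x, ENNReal.ofReal (q x) := by
    rw [lc (fun x => f x / a) (hf.div_const _) (fun x => div_nonneg (hf0 x) ha0.le)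
        (fun x => (div_le_one ha0).mpr (le_ciSup hbf x)),
      lc (fun x => g x / b) (hg.div_const _) (fun x => div_nonneg (hg0 x) hb0.le)
        (fun x => (div_le_one hb0).mpr (le_ciSup hbg x)), lc q hqm hq0 hq1]
    rw [← lintegral_const_mul' _ _ (by simp), ← lintegral_add_left]
    · refine setLIntegral_mono' measurableSet_Ioo ?_
      rintro s ⟨hs0, hs1⟩
      refine bm_one (measurableSet_lt measurable_const (hf.div_const _))
        (measurableSet_lt measurable_const (hg.div_const _)) ?_ ?_ ?_
      · obtain ⟨x, hx⟩ := exists_lt_of_lt_ciSup (show s * a < ⨆ x, f x by nlinarith)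
        exact ⟨x, (lt_div_iff₀ ha0).mpr hx⟩
      · obtain ⟨x, hx⟩ := exists_lt_of_lt_ciSup (show s * b < ⨆ x, g x by nlinarith)
        exact ⟨x, (lt_div_iff₀ hb0).mpr hx⟩
      · intro x hx y hy
        have hx' : s * a < f x := (lt_div_iff₀ ha0).mp hx
        have hy' : s * b < g y := (lt_div_iff₀ hb0).mp hy
        have hxy := H x y
        simp only [Set.mem_ofPred_eq, hq]
        rw [lt_div_iff₀ hc0]
        have : ENNReal.ofReal (s * c) < min (h ((x + y) / 2)) (ENNReal.ofReal c) := by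
          refine lt_min ?_ ?_
          · by_contra hcon
            push Not at hcon
            have h3 : h ((x + y) / 2) ^ 2 ≤ ENNReal.ofReal (s * c) ^ 2 := by gcongr
            have h4 := hxy.trans h3
            rw [← ENNReal.ofReal_mul (hf0 x), ← ENNReal.ofReal_pow (by positivity)] at h4
            rw [ENNReal.ofReal_le_ofReal_iff (by positivity)] at h4
            have h5 : (s * c) ^ 2 = (s * a) * (s * b) := by
              calc (s * c) ^ 2 = s ^ 2 * (c * c) := by ring
                _ = _ := by rw [hcc]; ring
            have h6 : (s * a) * (s * b) < f x * g y := by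
              apply mul_lt_mul'' hx' hy' <;> positivity
            linarith
          · rw [ENNReal.ofReal_lt_ofReal_iff hc0]; nlinarith
        have h7 := (ENNReal.toReal_lt_toReal ENNReal.ofReal_ne_top (hfin _)).mpr this
        rwa [ENNReal.toReal_ofReal (by positivity)] at h7
    · exact (Antitone.measurable (fun s t hst => measure_mono fun x hx => lt_of_le_of_lt hst hx))
  set P := ∫⁻ x, ENNReal.ofReal (f x / a) with hP
  set Q := ∫⁻ x, ENNReal.ofReal (g x / b) with hQ
  have eP : ∫⁻ x, ENNReal.ofReal (f x) = ENNReal.ofReal a * P := by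
    rw [hP, ← lintegral_const_mul' _ _ ENNReal.ofReal_ne_top]
    congr 1; ext x
    rw [← ENNReal.ofReal_mul ha0.le, mul_div_cancel₀ _ ha0.ne']
  have eQ : ∫⁻ x, ENNReal.ofReal (g x) = ENNReal.ofReal b * Q := by
    rw [hQ, ← lintegral_const_mul' _ _ ENNReal.ofReal_ne_top]
    congr 1; ext x
    rw [← ENNReal.ofReal_mul hb0.le, mul_div_cancel₀ _ hb0.ne']
  have e3 : ENNReal.ofReal c * ∫⁻ x, ENNReal.ofReal (q x) ≤ ∫⁻ x, h x := by
    rw [← lintegral_const_mul' _ _ ENNReal.ofReal_ne_top]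
    exact lintegral_mono hqh
  have e4 : P * Q ≤ (∫⁻ x, ENNReal.ofReal (q x)) ^ 2 := ennreal_amgm main
  calc _ = ENNReal.ofReal (c * c) * (P * Q) := by
        rw [eP, eQ, hcc, ENNReal.ofReal_mul ha0.le]; ring
    _ ≤ ENNReal.ofReal (c * c) * (∫⁻ x, ENNReal.ofReal (q x)) ^ 2 := by gcongr
    _ = (ENNReal.ofReal c * ∫⁻ x, ENNReal.ofReal (q x)) ^ 2 := by
        rw [ENNReal.ofReal_mul hc0.le]; ring
    _ ≤ _ := by gcongr

/-- Prékopa-Leindler in dimension one. -/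
theorem pl_one {f g h : ℝ → ℝ≥0∞} (hf : Measurable f) (hg : Measurable g)
    (hh : Measurable h)
    (H : ∀ x y, f x * g y ≤ h ((x + y) / 2) ^ 2) :
    (∫⁻ x, f x) * (∫⁻ x, g x) ≤ (∫⁻ x, h x) ^ 2 := by
  have step : ∀ k : ℕ, (∫⁻ x, min (f x) k) * (∫⁻ x, min (g x) k) ≤ (∫⁻ x, h x) ^ 2 := by
    intro k
    have hnt : ∀ u : ℝ≥0∞, min u (k : ℝ≥0∞) ≠ ∞ := fun u =>
      ne_top_of_le_ne_top (ENNReal.natCast_ne_top k) (min_le_right _ _)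
    have e : ∀ u : ℝ≥0∞, ENNReal.ofReal (min u (k : ℝ≥0∞)).toReal = min u (k : ℝ≥0∞) := fun u =>
      ENNReal.ofReal_toReal (hnt u)
    have hk : ∀ u : ℝ≥0∞, (min u (k : ℝ≥0∞)).toReal ≤ k := fun u => by
      have := ENNReal.toReal_mono (ENNReal.natCast_ne_top k) (min_le_right u (k:ℝ≥0∞))
      simpa using this
    have := pl_one_bdd (f := fun x => (min (f x) k).toReal) (g := fun x => (min (g x) k).toReal)
      (h := h) (hf.min measurable_const).ennreal_toReal (hg.min measurable_const).ennreal_toReal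
      hh (fun _ => ENNReal.toReal_nonneg) (fun _ => ENNReal.toReal_nonneg) k (fun x => hk _)
      (fun x => hk _) (fun x y => by
        rw [e, e]
        exact (mul_le_mul' (min_le_left _ _) (min_le_left _ _)).trans (H x y))
    simpa only [e] using this
  have sup : ∀ p : ℝ → ℝ≥0∞, Measurable p →
      Filter.Tendsto (fun k : ℕ => ∫⁻ x, min (p x) k) Filter.atTop (nhds (∫⁻ x, p x)) := by
    intro p hp
    refine lintegral_tendsto_of_tendsto_of_monotone (fun k => (hp.min measurable_const).aemeasurable)
      (Filter.Eventually.of_forall fun x i j hij => ?_) (Filter.Eventually.of_forall fun x => ?_)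
    · exact min_le_min_left _ (by exact_mod_cast hij)
    · have := (tendsto_const_nhds (x := p x) (f := Filter.atTop (α := ℕ))).min
        ENNReal.tendsto_nat_nhds_top
      simpa using this
  by_cases hz : ∫⁻ x, f x = 0
  · simp [hz]
  by_cases hz' : ∫⁻ x, g x = 0
  · simp [hz']
  exact le_of_tendsto' (ENNReal.Tendsto.mul (sup f hf) (Or.inl hz) (sup g hg) (Or.inl hz')) step

/-- Prékopa-Leindler on `Fin n → ℝ` at the midpoint. -/
theorem pl_pi (n : ℕ) : ∀ {f g h : (Fin n → ℝ) → ℝ≥0∞}, Measurable f → Measurable g →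
    Measurable h → (∀ x y, f x * g y ≤ h ((1/2 : ℝ) • (x + y)) ^ 2) →
    (∫⁻ x, f x) * (∫⁻ x, g x) ≤ (∫⁻ x, h x) ^ 2 := by
  induction n with
  | zero =>
    intro f g h _ _ _ H
    have := H default default
    have e0 : ∀ p : (Fin 0 → ℝ) → ℝ≥0∞, ∫⁻ x, p x = p default := fun p => by
      rw [lintegral_unique, volume_pi, Measure.pi_of_empty _ default]; simp
      exact congrArg p (Subsingleton.elim _ _)
    rw [e0, e0, e0]
    convert this using 3
  | succ n ih =>
    intro f g h hf hg hh H
    have mp := (volume_preserving_piFinSuccAbove (fun _ : Fin (n+1) => ℝ) 0).symm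
    have e : ∀ p : (Fin (n+1) → ℝ) → ℝ≥0∞, Measurable p →
        ∫⁻ x, p x = ∫⁻ a : ℝ, ∫⁻ v : Fin n → ℝ,
          p ((MeasurableEquiv.piFinSuccAbove (fun _ : Fin (n+1) => ℝ) 0).symm (a, v)) := by
      intro p hp
      rw [← mp.lintegral_comp hp, Measure.volume_eq_prod, lintegral_prod]
      exact (hp.comp (MeasurableEquiv.measurable _)).aemeasurable
    have m2 : ∀ p : (Fin (n+1) → ℝ) → ℝ≥0∞, Measurable p → Measurable fun z : ℝ × (Fin n → ℝ) =>
        p ((MeasurableEquiv.piFinSuccAbove (fun _ : Fin (n+1) => ℝ) 0).symm z) :=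
      fun p hp => hp.comp (MeasurableEquiv.measurable _)
    rw [e f hf, e g hg, e h hh]
    refine pl_one (m2 f hf).lintegral_prod_right' (m2 g hg).lintegral_prod_right'
      (m2 h hh).lintegral_prod_right' ?_
    intro a b
    refine ih ((m2 f hf).comp measurable_prodMk_left) ((m2 g hg).comp measurable_prodMk_left)
      ((m2 h hh).comp measurable_prodMk_left) ?_
    intro x y
    convert H _ _ using 3
    ext i
    refine Fin.cases ?_ (fun j => ?_) i
    · simp [MeasurableEquiv.piFinSuccAbove]; ring
    · simp [MeasurableEquiv.piFinSuccAbove]; ring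

/-- Prékopa-Leindler on Euclidean space at the midpoint. -/
theorem pl_euclidean {n : ℕ} {f g h : EuclideanSpace ℝ (Fin n) → ℝ≥0∞} (hf : Measurable f)
    (hg : Measurable g) (hh : Measurable h)
    (H : ∀ x y, f x * g y ≤ h ((1/2 : ℝ) • (x + y)) ^ 2) :
    (∫⁻ x, f x) * (∫⁻ x, g x) ≤ (∫⁻ x, h x) ^ 2 := by
  have mp := PiLp.volume_preserving_toLp (Fin n)
  rw [← mp.lintegral_comp hf, ← mp.lintegral_comp hg, ← mp.lintegral_comp hh]
  refine pl_pi n (hf.comp mp.measurable) (hg.comp mp.measurable) (hh.comp mp.measurable) ?_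
  intro x y
  exact H _ _

/-- Strong midpoint log-concavity of a measure, in functional (Prékopa-Leindler) form. -/
def LCm {n : ℕ} (t : ℝ) (μ : Measure (EuclideanSpace ℝ (Fin n))) : Prop :=
  ∀ F G H : EuclideanSpace ℝ (Fin n) → ℝ≥0∞, Measurable F → Measurable G → Measurable H →
    (∀ x y, F x * G y ≤
      ENNReal.ofReal (Real.exp (t * ‖x - y‖ ^ 2 / 4)) * H ((1/2 : ℝ) • (x + y)) ^ 2) →
    (∫⁻ x, F x ∂μ) * (∫⁻ x, G x ∂μ) ≤ (∫⁻ x, H x ∂μ) ^ 2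

theorem LCm.zero_of_nonneg {n : ℕ} {t : ℝ} (ht : 0 ≤ t)
    {μ : Measure (EuclideanSpace ℝ (Fin n))} (h : LCm t μ) : LCm 0 μ := by
  intro F G H hF hG hH hle
  refine h F G H hF hG hH fun x y => (hle x y).trans ?_
  gcongr

theorem LCm.withDensity {n : ℕ} {w : EuclideanSpace ℝ (Fin n) → ℝ≥0∞} (hw : Measurable w)
    (h : ∀ x y, w x * w y ≤ w ((1/2 : ℝ) • (x + y)) ^ 2) : LCm 0 (volume.withDensity w) := by
  intro F G H hF hG hH hle
  rw [lintegral_withDensity_eq_lintegral_mul _ hw hF, lintegral_withDensity_eq_lintegral_mul _ hw hG,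
    lintegral_withDensity_eq_lintegral_mul _ hw hH]
  refine pl_euclidean (hw.mul hF) (hw.mul hG) (hw.mul hH) fun x y => ?_
  simp only [Pi.mul_apply]
  have h1 := hle x y
  simp only [zero_mul, zero_div, Real.exp_zero, ENNReal.ofReal_one, one_mul] at h1
  calc w x * F x * (w y * G y) = (w x * w y) * (F x * G y) := by ring
    _ ≤ w ((1/2 : ℝ) • (x + y)) ^ 2 * H ((1/2 : ℝ) • (x + y)) ^ 2 := mul_le_mul' (h x y) h1
    _ = _ := by ring

theorem LCm.map {n m : ℕ} {μ : Measure (EuclideanSpace ℝ (Fin n))} (h : LCm 0 μ)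
    (A : EuclideanSpace ℝ (Fin n) →L[ℝ] EuclideanSpace ℝ (Fin m)) : LCm 0 (μ.map A) := by
  intro F G H hF hG hH hle
  have hA : Measurable A := A.continuous.measurable
  rw [lintegral_map hF hA, lintegral_map hG hA, lintegral_map hH hA]
  refine h _ _ _ (hF.comp hA) (hG.comp hA) (hH.comp hA) fun x y => ?_
  have := hle (A x) (A y)
  simpa using this

theorem LCm.restrict {n : ℕ} {μ : Measure (EuclideanSpace ℝ (Fin n))} (h : LCm 0 μ)
    {K : Set (EuclideanSpace ℝ (Fin n))} (hK : MeasurableSet K) (hc : Convex ℝ K) :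
    LCm 0 (μ.restrict K) := by
  intro F G H hF hG hH hle
  rw [← lintegral_indicator hK, ← lintegral_indicator hK, ← lintegral_indicator hK]
  refine h _ _ _ (hF.indicator hK) (hG.indicator hK) (hH.indicator hK) fun x y => ?_
  by_cases hx : x ∈ K
  · by_cases hy : y ∈ K
    · have : (1/2 : ℝ) • (x + y) ∈ K := by
        rw [smul_add]; exact hc hx hy (by norm_num) (by norm_num) (by norm_num)
      rw [Set.indicator_of_mem hx, Set.indicator_of_mem hy, Set.indicator_of_mem this]
      exact hle x y
    · simp [Set.indicator_of_notMem hy]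
  · simp [Set.indicator_of_notMem hx]

theorem LCm.smul {n : ℕ} {μ : Measure (EuclideanSpace ℝ (Fin n))} (h : LCm 0 μ) (c : ℝ≥0∞) :
    LCm 0 (c • μ) := by
  intro F G H hF hG hH hle
  simp only [lintegral_smul_measure, smul_eq_mul]
  calc _ = c ^ 2 * ((∫⁻ x, F x ∂μ) * (∫⁻ x, G x ∂μ)) := by ring
    _ ≤ c ^ 2 * (∫⁻ x, H x ∂μ) ^ 2 := by gcongr; exact h F G H hF hG hH hle
    _ = _ := by ring

/-- The exponential tilt. -/
def tiltFn {n : ℕ} (t : ℝ) (y x : EuclideanSpace ℝ (Fin n)) : ℝ := ⟪y, x⟫ - t * ‖x‖ ^ 2 / 2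

theorem tiltFn_mid {n : ℕ} (t : ℝ) (y x x' : EuclideanSpace ℝ (Fin n)) :
    tiltFn t y x + tiltFn t y x' + t * ‖x - x'‖ ^ 2 / 4 = 2 * tiltFn t y ((1/2 : ℝ) • (x + x')) := by
  unfold tiltFn
  rw [inner_smul_right, inner_add_right, norm_smul, mul_pow]
  have := parallelogram_law_with_norm ℝ x x'
  norm_num
  linear_combination (t/4) * this

theorem LCm.tilted {n : ℕ} {μ : Measure (EuclideanSpace ℝ (Fin n))} (h : LCm 0 μ) (t : ℝ)
    (y : EuclideanSpace ℝ (Fin n)) : LCm t (μ.tilted (tiltFn t y)) := by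
  intro F G H hF hG hH hle
  simp only [lintegral_tilted]
  set Z := ∫ x, Real.exp (tiltFn t y x) ∂μ
  have hZ : 0 ≤ Z := integral_nonneg fun x => (Real.exp_pos _).le
  have hm : Measurable fun x => ENNReal.ofReal (Real.exp (tiltFn t y x) / Z) := by
    unfold tiltFn
    fun_prop
  refine h _ _ _ (hm.mul hF) (hm.mul hG) (hm.mul hH) fun x x' => ?_
  simp only [zero_mul, zero_div, Real.exp_zero, ENNReal.ofReal_one, one_mul]
  set m := (1/2 : ℝ) • (x + x') with hmdef
  have e : ENNReal.ofReal (Real.exp (tiltFn t y x) / Z) * ENNReal.ofReal (Real.exp (tiltFn t y x') / Z)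
      * ENNReal.ofReal (Real.exp (t * ‖x - x'‖ ^ 2 / 4))
      = ENNReal.ofReal (Real.exp (tiltFn t y m) / Z) ^ 2 := by
    rw [← ENNReal.ofReal_mul (by positivity), ← ENNReal.ofReal_mul (by positivity),
      ← ENNReal.ofReal_pow (by positivity)]
    congr 1
    have h2 := tiltFn_mid t y x x'
    rw [← hmdef] at h2
    have h3 : Real.exp (tiltFn t y x) * Real.exp (tiltFn t y x') * Real.exp (t * ‖x - x'‖ ^ 2 / 4)
        = Real.exp (tiltFn t y m) ^ 2 := by
      rw [← Real.exp_add, ← Real.exp_add, h2, ← Real.exp_nat_mul]; norm_num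
    rw [div_pow, ← h3]; ring
  calc _ = (ENNReal.ofReal (Real.exp (tiltFn t y x) / Z) *
        ENNReal.ofReal (Real.exp (tiltFn t y x') / Z)) * (F x * G x') := by ring
    _ ≤ (ENNReal.ofReal (Real.exp (tiltFn t y x) / Z) *
        ENNReal.ofReal (Real.exp (tiltFn t y x') / Z)) *
        (ENNReal.ofReal (Real.exp (t * ‖x - x'‖ ^ 2 / 4)) * H m ^ 2) := by
          exact mul_le_mul' le_rfl (hle x x')
    _ = (ENNReal.ofReal (Real.exp (tiltFn t y m) / Z) * H m) ^ 2 := by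
          rw [mul_pow, ← e]; ring

/-- Bounded continuous-type integrability helper. -/
theorem integrable_of_bdd_supp {n : ℕ} {μ : Measure (EuclideanSpace ℝ (Fin n))} [IsFiniteMeasure μ]
    {r : ℝ} (hr : ∀ᵐ x ∂μ, ‖x‖ ≤ r) {h : EuclideanSpace ℝ (Fin n) → ℝ} (hc : Continuous h) :
    Integrable h μ := by
  obtain ⟨B, hB⟩ := (isCompact_closedBall (0 : EuclideanSpace ℝ (Fin n)) r).exists_bound_of_continuousOn
    hc.continuousOn
  refine Integrable.of_bound hc.aestronglyMeasurable B ?_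
  filter_upwards [hr] with x hx
  exact hB x (by simpa using hx)

theorem lc_fourth {n : ℕ} {μ : Measure (EuclideanSpace ℝ (Fin n))} [IsProbabilityMeasure μ]
    (h : LCm 0 μ) {r : ℝ} (hr : ∀ᵐ x ∂μ, ‖x‖ ≤ r) (θ : EuclideanSpace ℝ (Fin n)) (c : ℝ) :
    ∫ x, (⟪θ, x⟫ - c) ^ 4 ∂μ ≤ (162 * 324 ^ 2) * (∫ x, (⟪θ, x⟫ - c) ^ 2 ∂μ) ^ 2 := by
  set l : EuclideanSpace ℝ (Fin n) → ℝ := fun x => ⟪θ, x⟫ - c with hl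
  have lc : Continuous l := by rw [hl]; fun_prop
  have lm : Measurable fun x => |l x| := by fun_prop
  set v := ∫ x, l x ^ 2 ∂μ with hv
  have hv0 : 0 ≤ v := integral_nonneg fun x => sq_nonneg _
  set s0 := Real.sqrt (324 * v) with hs0
  have hs2 : s0 ^ 2 = 324 * v := Real.sq_sqrt (by positivity)
  -- tail comparison
  have tail : ∀ t : ℝ, 0 < t → μ {x | t < |l x| / 3} ≤
      μ {x | t < s0} + ENNReal.ofReal (1/162) * μ {x | t < |l x|} := by
    intro t ht
    by_cases hts : t < s0
    · refine le_trans prob_le_one ?_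
      have : {x : EuclideanSpace ℝ (Fin n) | t < s0} = Set.univ := by
        ext; simp [hts]
      rw [this]; simp
    push Not at hts
    have h1 : t ^ 2 * μ.real {x | t ^ 2 ≤ l x ^ 2} ≤ v :=
      mul_meas_ge_le_integral_of_nonneg (Filter.Eventually.of_forall fun x => sq_nonneg _)
        (integrable_of_bdd_supp hr (by fun_prop)) _
    have h2 : μ.real {x | t < |l x|} ≤ μ.real {x | t ^ 2 ≤ l x ^ 2} := by
      refine measureReal_mono (fun x hx => ?_)
      simp only [Set.mem_ofPred_eq] at hx ⊢
      rw [← sq_abs (l x)]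
      nlinarith
    have hst : 324 * v ≤ t ^ 2 := by
      rw [← hs2]; have : 0 ≤ s0 := Real.sqrt_nonneg _; nlinarith
    set q := μ.real {x | t < |l x|} with hq
    have hq0 : 0 ≤ q := measureReal_nonneg
    have hq1 : q ≤ 1/324 := by
      have : t ^ 2 * q ≤ v := le_trans (by gcongr) h1
      have ht2 : 0 < t ^ 2 := by positivity
      by_contra hcon
      push Not at hcon
      nlinarith
    have h3 : μ {x | t < |l x| / 3} * μ {x | |l x| ≤ t} ≤ μ {x | t < |l x|} ^ 2 := by
      have mF : MeasurableSet {x | t < |l x| / 3} := measurableSet_lt measurable_const (lm.div_const _)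
      have mG : MeasurableSet {x | |l x| ≤ t} := measurableSet_le lm measurable_const
      have mH : MeasurableSet {x | t < |l x|} := measurableSet_lt measurable_const lm
      have := h ({x | t < |l x| / 3}.indicator 1) ({x | |l x| ≤ t}.indicator 1)
        ({x | t < |l x|}.indicator 1) (measurable_one.indicator mF) (measurable_one.indicator mG)
        (measurable_one.indicator mH) (fun x y => by
          simp only [zero_mul, zero_div, Real.exp_zero, ENNReal.ofReal_one, one_mul]
          by_cases hx : x ∈ {x | t < |l x| / 3}
          · by_cases hy : y ∈ {x | |l x| ≤ t}
            · have hz : (1/2 : ℝ) • (x + y) ∈ {x | t < |l x|} := by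
                simp only [Set.mem_ofPred_eq] at hx hy ⊢
                have e : l ((1/2 : ℝ) • (x + y)) = (l x + l y) / 2 := by
                  simp only [hl, inner_smul_right, inner_add_right]; ring
                rw [e]
                rw [abs_div, abs_two]
                have := abs_sub_abs_le_abs_sub (l x) (-l y)
                rw [abs_neg, sub_neg_eq_add] at this
                linarith
              rw [Set.indicator_of_mem hx, Set.indicator_of_mem hy, Set.indicator_of_mem hz]
              simp
            · simp [Set.indicator_of_notMem hy]
          · simp [Set.indicator_of_notMem hx])
      rwa [lintegral_indicator_one mF, lintegral_indicator_one mG, lintegral_indicator_one mH] at this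
    have h4 : μ.real {x | t < |l x| / 3} * μ.real {x | |l x| ≤ t} ≤ q ^ 2 := by
      have := ENNReal.toReal_mono (by finiteness) h3
      rwa [ENNReal.toReal_mul, ENNReal.toReal_pow] at this
    have h5 : μ.real {x | |l x| ≤ t} = 1 - q := by
      have mH : MeasurableSet {x | t < |l x|} := measurableSet_lt measurable_const lm
      have := probReal_compl_eq_one_sub (μ := μ) mH
      rw [← this]; congr 1; ext x; simp
    rw [h5] at h4
    have h6 : μ.real {x | t < |l x| / 3} ≤ 1/162 * q := by
      have : 0 ≤ μ.real {x | t < |l x| / 3} := measureReal_nonneg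
      nlinarith
    refine le_trans ?_ (le_add_left le_rfl)
    rw [← ofReal_measureReal (by finiteness), ← ofReal_measureReal (s := {x | t < |l x|}) (by finiteness),
      ← ENNReal.ofReal_mul (by norm_num)]
    exact ENNReal.ofReal_le_ofReal h6
  have L1 := lintegral_rpow_eq_lintegral_meas_lt_mul μ (f := fun x => |l x| / 3)
    (Filter.Eventually.of_forall fun x => by positivity) (lm.div_const _).aemeasurable
    (p := 4) (by norm_num)
  have L2 := lintegral_rpow_eq_lintegral_meas_lt_mul μ (f := fun x => |l x|)
    (Filter.Eventually.of_forall fun x => by positivity) lm.aemeasurable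
    (p := 4) (by norm_num)
  have L3 := lintegral_rpow_eq_lintegral_meas_lt_mul μ (f := fun _ => s0)
    (Filter.Eventually.of_forall fun x => Real.sqrt_nonneg _) measurable_const.aemeasurable
    (p := 4) (by norm_num)
  have main : ∫⁻ x, ENNReal.ofReal ((|l x| / 3) ^ (4:ℝ)) ∂μ ≤
      ∫⁻ x, ENNReal.ofReal (s0 ^ (4:ℝ)) ∂μ +
        ENNReal.ofReal (1/162) * ∫⁻ x, ENNReal.ofReal (|l x| ^ (4:ℝ)) ∂μ := by
    rw [L1, L2, L3, mul_left_comm, ← mul_add]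
    gcongr
    rw [← lintegral_const_mul' _ _ ENNReal.ofReal_ne_top, ← lintegral_add_left]
    · refine setLIntegral_mono' measurableSet_Ioi fun t ht => ?_
      calc _ ≤ (μ {x | t < s0} + ENNReal.ofReal (1/162) * μ {x | t < |l x|}) *
            ENNReal.ofReal (t ^ ((4:ℝ) - 1)) := by gcongr; exact tail t ht
        _ = _ := by ring
    · refine Measurable.mul ?_ (by fun_prop)
      exact (Antitone.measurable (fun s t hst => measure_mono fun x hx => lt_of_le_of_lt hst hx))
  have r4 : ∀ u : ℝ, u ^ (4:ℝ) = u ^ 4 := fun u => by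
    rw [show (4:ℝ) = ((4:ℕ):ℝ) by norm_num, Real.rpow_natCast]
  simp only [r4] at main
  have i4 : Integrable (fun x => l x ^ 4) μ := integrable_of_bdd_supp hr (by fun_prop)
  have e1 : ∀ x, (|l x| / 3) ^ 4 = l x ^ 4 / 81 := fun x => by
    rw [div_pow, Even.pow_abs (by decide)]; norm_num
  have e2 : ∀ x, |l x| ^ 4 = l x ^ 4 := fun x => Even.pow_abs (by decide) _
  simp only [e1, e2] at main
  rw [← ofReal_integral_eq_lintegral_ofReal (i4.div_const _)
      (Filter.Eventually.of_forall fun x => by positivity),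
    ← ofReal_integral_eq_lintegral_ofReal i4
      (Filter.Eventually.of_forall fun x => by positivity), lintegral_const, measure_univ, mul_one,
    ← ENNReal.ofReal_mul (by norm_num), ← ENNReal.ofReal_add (by positivity)
      (mul_nonneg (by norm_num) (integral_nonneg fun x => by positivity)),
    ENNReal.ofReal_le_ofReal_iff (add_nonneg (by positivity)
      (mul_nonneg (by norm_num) (integral_nonneg fun x => by positivity))), integral_div] at main
  have e5 : s0 ^ 4 = (324 * v) ^ 2 := by rw [← hs2]; ring
  rw [e5] at main
  linarith

theorem exp_add_exp_neg_ge (x : ℝ) : 2 + x ^ 2 / 2 ≤ Real.exp x + Real.exp (-x) := by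
  rcases le_total 0 x with h | h
  · linarith [Real.quadratic_le_exp_of_nonneg h, Real.add_one_le_exp (-x)]
  · have := Real.quadratic_le_exp_of_nonneg (neg_nonneg.mpr h)
    rw [neg_sq] at this
    linarith [Real.add_one_le_exp x]

theorem lc_var {n : ℕ} {μ : Measure (EuclideanSpace ℝ (Fin n))} [IsProbabilityMeasure μ]
    {t : ℝ} (ht : 0 < t) (h : LCm t μ) {r : ℝ} (hr : ∀ᵐ x ∂μ, ‖x‖ ≤ r) :
    t * (∫ x, ‖x‖ ^ 2 ∂μ - (∫ x, ‖x‖ ∂μ) ^ 2) ≤ 4 := by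
  set s := Real.sqrt t with hs
  have hs2 : s ^ 2 = t := Real.sq_sqrt ht.le
  have hs0 : 0 < s := Real.sqrt_pos.mpr ht
  set m := ∫ x, ‖x‖ ∂μ with hm
  have pl := h (fun x => ENNReal.ofReal (Real.exp (s * (‖x‖ - m))))
    (fun x => ENNReal.ofReal (Real.exp (-(s * (‖x‖ - m)))))
    (fun x => ENNReal.ofReal (Real.exp (1/2))) (by fun_prop) (by fun_prop) (by fun_prop)
    (fun x y => by
      rw [← ENNReal.ofReal_mul (by positivity), ← ENNReal.ofReal_pow (by positivity),
        ← ENNReal.ofReal_mul (by positivity), ← Real.exp_nat_mul, ← Real.exp_add, ← Real.exp_add]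
      refine ENNReal.ofReal_le_ofReal (Real.exp_le_exp.mpr ?_)
      have h1 : ‖x‖ - ‖y‖ ≤ ‖x - y‖ := norm_sub_norm_le x y
      have h2 : t * ‖x - y‖ ^ 2 / 4 = (s * ‖x - y‖ / 2) ^ 2 := by rw [← hs2]; ring
      rw [h2]
      push_cast
      have h3 : s * (‖x‖ - ‖y‖) ≤ s * ‖x - y‖ := by gcongr
      nlinarith [sq_nonneg (s * ‖x - y‖ / 2 - 1)])
  have ip : Integrable (fun x => Real.exp (s * (‖x‖ - m))) μ :=
    integrable_of_bdd_supp hr (by fun_prop)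
  have iq : Integrable (fun x => Real.exp (-(s * (‖x‖ - m)))) μ :=
    integrable_of_bdd_supp hr (by fun_prop)
  have i1 : Integrable (fun x : EuclideanSpace ℝ (Fin n) => ‖x‖) μ :=
    integrable_of_bdd_supp hr (by fun_prop)
  have i2 : Integrable (fun x : EuclideanSpace ℝ (Fin n) => ‖x‖ ^ 2) μ :=
    integrable_of_bdd_supp hr (by fun_prop)
  rw [← ofReal_integral_eq_lintegral_ofReal ip (Filter.Eventually.of_forall fun x => by positivity),
    ← ofReal_integral_eq_lintegral_ofReal iq (Filter.Eventually.of_forall fun x => by positivity),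
    lintegral_const, measure_univ, mul_one, ← ENNReal.ofReal_pow (by positivity),
    ← ENNReal.ofReal_mul (integral_nonneg fun x => by positivity),
    ENNReal.ofReal_le_ofReal_iff (by positivity), ← Real.exp_nat_mul] at pl
  set p := ∫ x, Real.exp (s * (‖x‖ - m)) ∂μ
  set q := ∫ x, Real.exp (-(s * (‖x‖ - m))) ∂μ
  have i3 : Integrable (fun x : EuclideanSpace ℝ (Fin n) => s * (‖x‖ - m)) μ :=
    integrable_of_bdd_supp hr (by fun_prop)
  have c0 : ∫ x, s * (‖x‖ - m) ∂μ = 0 := by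
    rw [integral_const_mul, integral_sub i1 (integrable_const _)]; simp [hm]
  have hp : 1 ≤ p := by
    have : ∫ x, (s * (‖x‖ - m) + 1) ∂μ ≤ p :=
      integral_mono (i3.add (integrable_const _)) ip fun x => Real.add_one_le_exp _
    rw [integral_add i3 (integrable_const _), c0] at this
    simpa using this
  have hq : 1 ≤ q := by
    have i3' : Integrable (fun x : EuclideanSpace ℝ (Fin n) => -(s * (‖x‖ - m))) μ := i3.neg
    have : ∫ x, (-(s * (‖x‖ - m)) + 1) ∂μ ≤ q :=
      integral_mono (i3'.add (integrable_const _)) iq fun x => Real.add_one_le_exp _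
    rw [integral_add i3' (integrable_const _), integral_neg, c0] at this
    simpa using this
  have i4 : Integrable (fun x : EuclideanSpace ℝ (Fin n) => 2 + (s * (‖x‖ - m)) ^ 2 / 2) μ :=
    integrable_of_bdd_supp hr (by fun_prop)
  have hpq : 2 + t * (∫ x, ‖x‖ ^ 2 ∂μ - m ^ 2) / 2 ≤ p + q := by
    have h1 : ∫ x, (2 + (s * (‖x‖ - m)) ^ 2 / 2) ∂μ ≤ p + q := by
      rw [← integral_add ip iq]
      exact integral_mono i4 (ip.add iq) fun x => exp_add_exp_neg_ge _
    refine le_trans (le_of_eq ?_) h1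
    have e : ∀ x : EuclideanSpace ℝ (Fin n), 2 + (s * (‖x‖ - m)) ^ 2 / 2
        = (2 + t / 2 * m ^ 2) + (t / 2 * ‖x‖ ^ 2 - (t * m) * ‖x‖) := fun x => by rw [← hs2]; ring
    simp only [e]
    have i5 : Integrable (fun x : EuclideanSpace ℝ (Fin n) => t / 2 * ‖x‖ ^ 2 - (t * m) * ‖x‖) μ :=
      integrable_of_bdd_supp hr (by fun_prop)
    rw [integral_add (integrable_const _) i5,
      integral_sub (i2.const_mul _) (i1.const_mul _), integral_const_mul, integral_const_mul, ← hm]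
    simp
    ring
  have he : Real.exp ((2:ℕ) * (1/2)) ≤ 3 := by
    norm_num
    linarith [Real.exp_one_lt_d9]
  nlinarith [mul_nonneg (sub_nonneg.mpr hp) (sub_nonneg.mpr hq)]

open scoped ComplexOrder MatrixOrder Matrix.Norms.L2Operator in
theorem posSemidef_factor {n : ℕ} {A : Matrix (Fin n) (Fin n) ℝ} (hA : A.PosSemidef) :
    ∃ B : Matrix (Fin n) (Fin n) ℝ, A = star B * B :=
  CStarAlgebra.nonneg_iff_eq_star_mul_self.mp hA.nonneg

section Static

variable {n : ℕ} {μ : Measure (EuclideanSpace ℝ (Fin n))} [IsProbabilityMeasure μ] {r : ℝ}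

theorem cs_bdd (hr : ∀ᵐ x ∂μ, ‖x‖ ≤ r) {f g : EuclideanSpace ℝ (Fin n) → ℝ}
    (hf : Continuous f) (hg : Continuous g) :
    (∫ x, f x * g x ∂μ) ^ 2 ≤ (∫ x, f x ^ 2 ∂μ) * (∫ x, g x ^ 2 ∂μ) := by
  have i1 : Integrable (fun x => f x ^ 2) μ := integrable_of_bdd_supp hr (by fun_prop)
  have i2 : Integrable (fun x => f x * g x) μ := integrable_of_bdd_supp hr (by fun_prop)
  have i3 : Integrable (fun x => g x ^ 2) μ := integrable_of_bdd_supp hr (by fun_prop)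
  have key : ∀ s : ℝ, 0 ≤ (∫ x, f x ^ 2 ∂μ) * (s * s) + (2 * ∫ x, f x * g x ∂μ) * s +
      ∫ x, g x ^ 2 ∂μ := by
    intro s
    have : 0 ≤ ∫ x, (s * f x + g x) ^ 2 ∂μ := integral_nonneg fun x => sq_nonneg _
    refine this.trans (le_of_eq ?_)
    have e : ∀ x, (s * f x + g x) ^ 2 = (s * s) * f x ^ 2 + ((2 * s) * (f x * g x) + g x ^ 2) :=
      fun x => by ring
    have i5 : Integrable (fun x => (2 * s) * (f x * g x) + g x ^ 2) μ :=
      integrable_of_bdd_supp hr (by fun_prop)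
    simp only [e]
    rw [integral_add (i1.const_mul _) i5, integral_add (i2.const_mul _) i3, integral_const_mul,
      integral_const_mul]
    ring
  have := discrim_le_zero key
  rw [discrim] at this
  nlinarith

theorem integral_sum2 (hr : ∀ᵐ x ∂μ, ‖x‖ ≤ r) {z : Fin n → EuclideanSpace ℝ (Fin n) → ℝ}
    (hz : ∀ i, Continuous (z i)) (c : Fin n → Fin n → ℝ) :
    ∫ x, ∑ i, ∑ j, c i j * (z i x * z j x) ∂μ = ∑ i, ∑ j, c i j * ∫ x, z i x * z j x ∂μ := by
  rw [integral_finsetSum]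
  · refine Finset.sum_congr rfl fun i _ => ?_
    rw [integral_finsetSum]
    · refine Finset.sum_congr rfl fun j _ => ?_
      rw [integral_const_mul]
    · intro j _
      exact integrable_of_bdd_supp hr (by have := hz i; have := hz j; fun_prop)
  · intro i _
    exact integrable_of_bdd_supp hr (by have := hz i; fun_prop)

theorem integral_sum3 (hr : ∀ᵐ x ∂μ, ‖x‖ ≤ r) {z : Fin n → EuclideanSpace ℝ (Fin n) → ℝ}
    (hz : ∀ i, Continuous (z i)) (c : Fin n → Fin n → Fin n → ℝ) :
    ∫ x, ∑ i, ∑ j, ∑ k, c i j k * (z i x * z j x * z k x) ∂μ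
      = ∑ i, ∑ j, ∑ k, c i j k * ∫ x, z i x * z j x * z k x ∂μ := by
  rw [integral_finsetSum]
  · refine Finset.sum_congr rfl fun i _ => ?_
    rw [integral_finsetSum]
    · refine Finset.sum_congr rfl fun j _ => ?_
      rw [integral_finsetSum]
      · refine Finset.sum_congr rfl fun k _ => ?_
        rw [integral_const_mul]
      · intro k _
        exact integrable_of_bdd_supp hr (by have := hz i; have := hz j; have := hz k; fun_prop)
    · intro j _
      exact integrable_of_bdd_supp hr (by have := hz i; have := hz j; fun_prop)
  · intro i _
    exact integrable_of_bdd_supp hr (by have := hz i; fun_prop)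

theorem sum_sq2 (a b : Fin n → ℝ) :
    (∑ i, a i * b i) ^ 2 = ∑ i, ∑ j, (a i * a j) * (b i * b j) := by
  rw [sq, Finset.sum_mul_sum]
  refine Finset.sum_congr rfl fun i _ => Finset.sum_congr rfl fun j _ => by ring

theorem sum_cube3 (a b : Fin n → ℝ) :
    (∑ i, a i * b i) ^ 3 = ∑ i, ∑ j, ∑ k, (a i * a j * a k) * (b i * b j * b k) := by
  rw [pow_succ, sum_sq2, Finset.sum_mul]
  refine Finset.sum_congr rfl fun i _ => ?_
  rw [Finset.sum_mul]
  refine Finset.sum_congr rfl fun j _ => ?_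
  rw [Finset.mul_sum]
  refine Finset.sum_congr rfl fun k _ => by ring

/-- quadratic form of the covariance. -/
theorem cov_quad (hr : ∀ᵐ x ∂μ, ‖x‖ ≤ r) {z : Fin n → EuclideanSpace ℝ (Fin n) → ℝ}
    (hz : ∀ i, Continuous (z i)) (v : Fin n → ℝ) :
    ∑ i, ∑ j, (v i * v j) * ∫ x, z i x * z j x ∂μ = ∫ x, (∑ i, v i * z i x) ^ 2 ∂μ := by
  rw [← integral_sum2 hr hz]
  refine integral_congr_ae (Filter.Eventually.of_forall fun x => ?_)
  simp only
  rw [sum_sq2]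

theorem cov_psd (hr : ∀ᵐ x ∂μ, ‖x‖ ≤ r) {z : Fin n → EuclideanSpace ℝ (Fin n) → ℝ}
    (hz : ∀ i, Continuous (z i)) (v : Fin n → ℝ) :
    0 ≤ ∑ i, ∑ j, (v i * v j) * ∫ x, z i x * z j x ∂μ := by
  rw [cov_quad hr hz]
  exact integral_nonneg fun x => sq_nonneg _

theorem cov_cubic (hr : ∀ᵐ x ∂μ, ‖x‖ ≤ r) {z : Fin n → EuclideanSpace ℝ (Fin n) → ℝ}
    (hz : ∀ i, Continuous (z i)) {cv : Fin n → Fin n → ℝ} (hcv : ∀ i j, cv i j = ∫ x, z i x * z j x ∂μ) :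
    0 ≤ ∑ i, ∑ j, cv i j * ∑ k, cv i k * cv j k := by
  have : ∑ i, ∑ j, cv i j * ∑ k, cv i k * cv j k
      = ∑ k, ∑ i, ∑ j, (cv i k * cv j k) * cv i j := by
    rw [Finset.sum_comm' (s := Finset.univ) (t := fun _ => Finset.univ) (t' := Finset.univ)
      (s' := fun _ => Finset.univ) (by simp)]
    simp only [Finset.mul_sum]
    rw [Finset.sum_comm]
    conv_lhs => enter [2, i]; rw [Finset.sum_comm]
    rw [Finset.sum_comm]
    refine Finset.sum_congr rfl fun k _ => Finset.sum_congr rfl fun i _ =>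
      Finset.sum_congr rfl fun j _ => by ring
  rw [this]
  refine Finset.sum_nonneg fun k _ => ?_
  simp only [hcv _ _]
  exact cov_psd hr hz (fun i => ∫ x, z i x * z k x ∂μ)

theorem cov_op (cv : Fin n → Fin n → ℝ) (c : Fin n → ℝ) :
    ∑ i, ∑ j, (c i * c j) * cv i j ≤ Real.sqrt (∑ i, ∑ j, cv i j ^ 2) * ∑ i, c i ^ 2 := by
  have h1 := Finset.sum_mul_sq_le_sq_mul_sq (Finset.univ : Finset (Fin n × Fin n))
    (fun p => c p.1 * c p.2) (fun p => cv p.1 p.2)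
  simp only [Fintype.sum_prod_type] at h1
  have h2 : ∑ i, ∑ j, (c i * c j) ^ 2 = (∑ i, c i ^ 2) ^ 2 := by
    rw [sq (∑ i, c i ^ 2), Finset.sum_mul_sum]
    refine Finset.sum_congr rfl fun i _ => Finset.sum_congr rfl fun j _ => by ring
  rw [h2] at h1
  have hS : 0 ≤ ∑ i, ∑ j, cv i j ^ 2 :=
    Finset.sum_nonneg fun i _ => Finset.sum_nonneg fun j _ => sq_nonneg _
  refine abs_le_of_sq_le_sq' ?_ (mul_nonneg (Real.sqrt_nonneg _)
    (Finset.sum_nonneg fun i _ => sq_nonneg _)) |>.2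
  rw [mul_pow, Real.sq_sqrt hS]
  linarith

theorem cov_lip (hr : ∀ᵐ x ∂μ, ‖x‖ ≤ r) {z : Fin n → EuclideanSpace ℝ (Fin n) → ℝ}
    (hz : ∀ i, Continuous (z i)) {φ : EuclideanSpace ℝ (Fin n) → ℝ} (hφ : Continuous φ)
    {cv : Fin n → Fin n → ℝ} (hcv : ∀ i j, cv i j = ∫ x, z i x * z j x ∂μ) :
    ∑ i, (∫ x, z i x * φ x ∂μ) ^ 2 ≤
      Real.sqrt (∑ i, ∑ j, cv i j ^ 2) * ∫ x, φ x ^ 2 ∂μ := by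
  set c : Fin n → ℝ := fun i => ∫ x, z i x * φ x ∂μ with hc
  set w := ∑ i, c i ^ 2 with hw
  have hw0 : 0 ≤ w := Finset.sum_nonneg fun i _ => sq_nonneg _
  have e1 : w = ∫ x, (∑ i, c i * z i x) * φ x ∂μ := by
    simp only [Finset.sum_mul]
    rw [integral_finsetSum]
    · refine Finset.sum_congr rfl fun i _ => ?_
      simp only [mul_assoc]
      rw [integral_const_mul]
      simp only [hc]; ring
    · intro i _
      exact integrable_of_bdd_supp hr (by have := hz i; fun_prop)
  have h1 := cs_bdd hr (f := fun x => ∑ i, c i * z i x) (by fun_prop) hφ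
  rw [← e1, ← cov_quad hr hz] at h1
  have h2 := cov_op cv c
  simp only [← hcv] at h1
  have hV : 0 ≤ ∫ x, φ x ^ 2 ∂μ := integral_nonneg fun x => sq_nonneg _
  set R := Real.sqrt (∑ i, ∑ j, cv i j ^ 2)
  have hR : 0 ≤ R := Real.sqrt_nonneg _
  have h3 : w ^ 2 ≤ R * w * ∫ x, φ x ^ 2 ∂μ := h1.trans (by gcongr)
  rcases hw0.eq_or_lt with h0 | h0
  · change w ≤ _
    rw [← h0]; positivity
  · change w ≤ _
    by_contra hcon
    push Not at hcon
    nlinarith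

theorem third_moment (hr : ∀ᵐ x ∂μ, ‖x‖ ≤ r) {z : Fin n → EuclideanSpace ℝ (Fin n) → ℝ}
    (hz : ∀ i, Continuous (z i)) {C0 : ℝ} (hC0 : 0 ≤ C0)
    (H1 : ∀ a : Fin n → ℝ, ∫ x, (∑ i, a i * z i x) ^ 4 ∂μ ≤ C0 * (∫ x, (∑ i, a i * z i x) ^ 2 ∂μ) ^ 2)
    {cv : Fin n → Fin n → ℝ} (hcv : ∀ i j, cv i j = ∫ x, z i x * z j x ∂μ) :
    ∑ i, ∑ j, ∑ k, (∫ x, z i x * z j x * z k x ∂μ) ^ 2 ≤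
      C0 * Real.sqrt (∑ i, ∑ j, cv i j ^ 2) ^ 3 := by
  set T : Fin n → Fin n → Fin n → ℝ := fun i j k => ∫ x, z i x * z j x * z k x ∂μ with hT
  set S := ∑ i, ∑ j, cv i j ^ 2 with hS
  have hS0 : 0 ≤ S := Finset.sum_nonneg fun i _ => Finset.sum_nonneg fun j _ => sq_nonneg _
  set Q : EuclideanSpace ℝ (Fin n) → ℝ := fun x =>
    ∑ i, ∑ j, ∑ k, T i j k * (z i x * z j x * z k x) with hQ
  set u : EuclideanSpace ℝ (Fin n) → ℝ := fun x =>
    ∑ i, ∑ j, (z i x * z j x) * cv i j with hu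
  have Qc : Continuous Q := by rw [hQ]; fun_prop
  have uc : Continuous u := by rw [hu]; fun_prop
  have eQ : ∫ x, Q x ∂μ = ∑ i, ∑ j, ∑ k, T i j k ^ 2 := by
    rw [hQ, integral_sum3 hr hz]
    refine Finset.sum_congr rfl fun i _ => Finset.sum_congr rfl fun j _ =>
      Finset.sum_congr rfl fun k _ => by simp only [hT]; ring
  have eQx : ∀ x, Q x = ∫ x', (∑ i, z i x * z i x') ^ 3 ∂μ := by
    intro x
    simp only [sum_cube3]
    rw [integral_sum3 hr hz]
    refine Finset.sum_congr rfl fun i _ => Finset.sum_congr rfl fun j _ =>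
      Finset.sum_congr rfl fun k _ => by simp only [hT]; ring
  have eux : ∀ x, u x = ∫ x', (∑ i, z i x * z i x') ^ 2 ∂μ := by
    intro x
    rw [← cov_quad hr hz]
    simp only [hu, hcv]
  have hu0 : ∀ x, 0 ≤ u x := fun x => by
    rw [eux]; exact integral_nonneg fun x => sq_nonneg _
  have hQu : ∀ x, Q x ^ 2 ≤ C0 * u x ^ 3 := by
    intro x
    have h1 := cs_bdd hr (f := fun x' => ∑ i, z i x * z i x')
      (g := fun x' => (∑ i, z i x * z i x') ^ 2) (by fun_prop) (by fun_prop)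
    have e : ∀ x', (∑ i, z i x * z i x') * (∑ i, z i x * z i x') ^ 2
      = (∑ i, z i x * z i x') ^ 3 := fun x' => by ring
    have e' : ∀ x', ((∑ i, z i x * z i x') ^ 2) ^ 2
      = (∑ i, z i x * z i x') ^ 4 := fun x' => by ring
    simp only [e, e'] at h1
    rw [← eQx, ← eux] at h1
    have h2 := H1 (fun i => z i x)
    rw [← eux] at h2
    calc Q x ^ 2 ≤ u x * ∫ x', (∑ i, z i x * z i x') ^ 4 ∂μ := h1
      _ ≤ u x * (C0 * u x ^ 2) := mul_le_mul_of_nonneg_left h2 (hu0 x)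
      _ = _ := by ring
  have eu : ∫ x, u x ∂μ = S := by
    have : ∀ x, u x = ∑ i, ∑ j, cv i j * (z i x * z j x) := fun x => by
      simp only [hu]
      refine Finset.sum_congr rfl fun i _ => Finset.sum_congr rfl fun j _ => by ring
    simp only [this]
    rw [integral_sum2 hr hz, hS]
    refine Finset.sum_congr rfl fun i _ => Finset.sum_congr rfl fun j _ => by rw [← hcv]; ring
  have eu2 : ∫ x, u x ^ 2 ∂μ ≤ C0 * S ^ 2 := by
    have psd : (Matrix.of cv).PosSemidef := by
      refine Matrix.PosSemidef.of_dotProduct_mulVec_nonneg ?_ fun v => ?_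
      · ext i j
        simp [hcv, mul_comm]
      · have := cov_psd hr hz v
        simp only [dotProduct, Matrix.mulVec, Matrix.of_apply, Finset.mul_sum]
        refine this.trans (le_of_eq ?_)
        refine Finset.sum_congr rfl fun i _ => Finset.sum_congr rfl fun j _ => ?_
        rw [← hcv]; simp; ring
    obtain ⟨B, hB⟩ := posSemidef_factor psd
    have hB' : ∀ i j, cv i j = ∑ k, B k i * B k j := fun i j => by
      have := congrFun (congrFun hB i) j
      simpa [Matrix.mul_apply] using this
    set l : Fin n → EuclideanSpace ℝ (Fin n) → ℝ := fun k x => ∑ i, B k i * z i x with hl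
    have lc : ∀ k, Continuous (l k) := fun k => by simp only [hl]; fun_prop
    have eul : ∀ x, u x = ∑ k, l k x ^ 2 := by
      intro x
      simp only [hu, hl, hB', sum_sq2, Finset.mul_sum]
      conv_lhs => enter [2, i]; rw [Finset.sum_comm]
      rw [Finset.sum_comm]
      refine Finset.sum_congr rfl fun k _ => Finset.sum_congr rfl fun i _ =>
        Finset.sum_congr rfl fun j _ => by ring
    have eu2 : ∀ x, u x ^ 2 = ∑ k, ∑ k', 1 * ((fun k x => l k x ^ 2) k x * (fun k x => l k x ^ 2) k' x) := by
      intro x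
      rw [eul, sq, Finset.sum_mul_sum]; simp
    have eS : S = ∑ k, ∫ x, l k x ^ 2 ∂μ := by
      rw [← eu]
      simp only [eul]
      rw [integral_finsetSum]
      intro k _
      exact integrable_of_bdd_supp hr (by have := lc k; fun_prop)
    simp only [eu2]
    rw [integral_sum2 hr (z := fun k x => l k x ^ 2) (fun k => by have := lc k; fun_prop)]
    rw [eS, sq, Finset.sum_mul_sum, Finset.mul_sum]
    refine Finset.sum_le_sum fun k _ => ?_
    rw [Finset.mul_sum]
    refine Finset.sum_le_sum fun k' _ => ?_
    have h1 := cs_bdd hr (f := fun x => l k x ^ 2) (g := fun x => l k' x ^ 2)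
      (by have := lc k; fun_prop) (by have := lc k'; fun_prop)
    simp only [← pow_mul] at h1
    norm_num at h1
    have h2 := H1 (B k)
    have h3 := H1 (B k')
    change ∫ x, l k x ^ 4 ∂μ ≤ C0 * (∫ x, l k x ^ 2 ∂μ) ^ 2 at h2
    change ∫ x, l k' x ^ 4 ∂μ ≤ C0 * (∫ x, l k' x ^ 2 ∂μ) ^ 2 at h3
    have p1 : 0 ≤ ∫ x, l k x ^ 2 ∂μ := integral_nonneg fun x => sq_nonneg _
    have p2 : 0 ≤ ∫ x, l k' x ^ 2 ∂μ := integral_nonneg fun x => sq_nonneg _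
    have p3 : 0 ≤ ∫ x, l k' x ^ 4 ∂μ := integral_nonneg fun x => by positivity
    rw [one_mul]
    refine abs_le_of_sq_le_sq' ?_ (by positivity) |>.2
    calc _ ≤ _ := h1
      _ ≤ (C0 * (∫ x, l k x ^ 2 ∂μ) ^ 2) * (C0 * (∫ x, l k' x ^ 2 ∂μ) ^ 2) := by gcongr
      _ = _ := by ring
  have hQle : ∀ x, Q x ≤ Real.sqrt C0 * (Real.sqrt (u x) * u x) := by
    intro x
    refine abs_le_of_sq_le_sq' ?_ (mul_nonneg (Real.sqrt_nonneg _)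
      (mul_nonneg (Real.sqrt_nonneg _) (hu0 x))) |>.2
    rw [mul_pow, mul_pow, Real.sq_sqrt hC0, Real.sq_sqrt (hu0 x)]
    refine (hQu x).trans (le_of_eq (by ring))
  have h5 : ∑ i, ∑ j, ∑ k, T i j k ^ 2 ≤ Real.sqrt C0 * ∫ x, Real.sqrt (u x) * u x ∂μ := by
    rw [← eQ, ← integral_const_mul]
    exact integral_mono (integrable_of_bdd_supp hr Qc) (integrable_of_bdd_supp hr (by fun_prop)) hQle
  have h6 := cs_bdd hr (f := fun x => Real.sqrt (u x)) (g := u) (by fun_prop) uc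
  simp only [Real.sq_sqrt (hu0 _)] at h6
  rw [eu] at h6
  refine h5.trans ?_
  refine abs_le_of_sq_le_sq' ?_ (by positivity) |>.2
  rw [mul_pow, Real.sq_sqrt hC0, mul_pow, ← pow_mul]
  have : Real.sqrt S ^ (3 * 2) = S ^ 3 := by
    rw [mul_comm 3 2, pow_mul, Real.sq_sqrt hS0]
  rw [this]
  calc _ ≤ C0 * (S * (C0 * S ^ 2)) := by gcongr; exact h6.trans (by gcongr)
    _ = _ := by ring

end Static


section Calculus

set_option linter.unusedSectionVars false

variable {n : ℕ} {ν : Measure (EuclideanSpace ℝ (Fin n))} [IsProbabilityMeasure ν] {r : ℝ}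

theorem hasDerivAt_expInt (hr : ∀ᵐ x ∂ν, ‖x‖ ≤ r) {h c l : EuclideanSpace ℝ (Fin n) → ℝ}
    (hh : Continuous h) (hc : Continuous c) (hl : Continuous l) (s : ℝ) :
    HasDerivAt (fun s : ℝ => ∫ x, h x * Real.exp (c x + s * l x) ∂ν)
      (∫ x, h x * l x * Real.exp (c x + s * l x) ∂ν) s := by
  have hK : IsCompact (Set.Icc (s - 1) (s + 1) ×ˢ Metric.closedBall (0 : EuclideanSpace ℝ (Fin n)) r) :=
    isCompact_Icc.prod (isCompact_closedBall _ _)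
  obtain ⟨B, hB⟩ := hK.exists_bound_of_continuousOn
    (f := fun p : ℝ × EuclideanSpace ℝ (Fin n) => h p.2 * l p.2 * Real.exp (c p.2 + p.1 * l p.2))
    (by fun_prop)
  refine (hasDerivAt_integral_of_dominated_loc_of_deriv_le (μ := ν) (bound := fun _ => B)
    (F := fun s x => h x * Real.exp (c x + s * l x))
    (F' := fun s x => h x * l x * Real.exp (c x + s * l x)) (x₀ := s)
    (Icc_mem_nhds (show s - 1 < s by linarith) (show s < s + 1 by linarith))
    ?_ ?_ ?_ ?_ ?_ ?_).2
  · exact Filter.Eventually.of_forall fun s' => Continuous.aestronglyMeasurable (by fun_prop)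
  · exact integrable_of_bdd_supp hr (by fun_prop)
  · exact Continuous.aestronglyMeasurable (by fun_prop)
  · filter_upwards [hr] with x hx s' hs'
    exact hB (s', x) ⟨hs', by simpa using hx⟩
  · exact integrable_const _
  · refine Filter.Eventually.of_forall fun x s' _ => ?_
    have h1 : HasDerivAt (fun s : ℝ => c x + s * l x) (l x) s' := by
      simpa using ((hasDerivAt_id s').mul_const (l x)).const_add (c x)
    have := (h1.exp).const_mul (h x)
    exact this.congr_deriv (by ring)

theorem integral_tilted_div (g h : EuclideanSpace ℝ (Fin n) → ℝ) :
    ∫ x, h x ∂(ν.tilted g) = (∫ x, h x * Real.exp (g x) ∂ν) / ∫ x, 1 * Real.exp (g x) ∂ν := by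
  rw [integral_tilted, ← integral_div]
  simp only [one_mul]
  congr 1; ext x; simp only [smul_eq_mul]; ring

theorem expInt_pos (hr : ∀ᵐ x ∂ν, ‖x‖ ≤ r) {g : EuclideanSpace ℝ (Fin n) → ℝ} (hg : Continuous g) :
    0 < ∫ x, 1 * Real.exp (g x) ∂ν := by
  simp only [one_mul]
  exact integral_exp_pos (integrable_of_bdd_supp hr (by fun_prop))

theorem hasDerivAt_tilt (hr : ∀ᵐ x ∂ν, ‖x‖ ≤ r) {h c l : EuclideanSpace ℝ (Fin n) → ℝ}
    (hh : Continuous h) (hc : Continuous c) (hl : Continuous l) (s : ℝ) :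
    HasDerivAt (fun s : ℝ => ∫ x, h x ∂(ν.tilted fun x => c x + s * l x))
      ((∫ x, h x * l x ∂(ν.tilted fun x => c x + s * l x)) -
        (∫ x, h x ∂(ν.tilted fun x => c x + s * l x)) *
        (∫ x, l x ∂(ν.tilted fun x => c x + s * l x))) s := by
  simp only [integral_tilted_div]
  have hpos : 0 < ∫ x, 1 * Real.exp (c x + s * l x) ∂ν := expInt_pos hr (by fun_prop)
  have h1 := hasDerivAt_expInt hr hh hc hl s
  have h2 := hasDerivAt_expInt hr (continuous_const (y := (1:ℝ))) hc hl s
  have := h1.div h2 hpos.ne'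
  refine this.congr_deriv ?_
  simp only [one_mul] at hpos ⊢
  generalize (∫ x, Real.exp (c x + s * l x) ∂ν) = I1 at *
  generalize (∫ x, h x * Real.exp (c x + s * l x) ∂ν) = I2 at *
  generalize (∫ x, l x * Real.exp (c x + s * l x) ∂ν) = I3 at *
  generalize (∫ x, h x * l x * Real.exp (c x + s * l x) ∂ν) = I4 at *
  field_simp

/-- Mean of `h` under the tilted measure. -/
def tmean (ν : Measure (EuclideanSpace ℝ (Fin n))) (h : EuclideanSpace ℝ (Fin n) → ℝ) (t : ℝ)
    (y : EuclideanSpace ℝ (Fin n)) : ℝ := ∫ x, h x ∂(ν.tilted (tiltFn t y))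

/-- coordinate vectors -/
abbrev ebasis (i : Fin n) : EuclideanSpace ℝ (Fin n) := EuclideanSpace.single i (1:ℝ)

theorem tmean_deriv_y (hr : ∀ᵐ x ∂ν, ‖x‖ ≤ r) {h : EuclideanSpace ℝ (Fin n) → ℝ}
    (hh : Continuous h) (t : ℝ) (y : EuclideanSpace ℝ (Fin n)) (i : Fin n) (s : ℝ) :
    HasDerivAt (fun s : ℝ => tmean ν h t (y + s • ebasis i))
      (tmean ν (fun x => h x * x i) t (y + s • ebasis i) -
        tmean ν h t (y + s • ebasis i) * tmean ν (fun x => x i) t (y + s • ebasis i)) s := by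
  have e : ∀ s : ℝ, tiltFn t (y + s • ebasis i) = fun x => tiltFn t y x + s * x i := by
    intro s; ext x
    simp only [tiltFn, inner_add_left, inner_smul_left, EuclideanSpace.inner_single_left]
    simp; ring
  simp only [tmean, e]
  exact hasDerivAt_tilt hr hh (by unfold tiltFn; fun_prop) (by fun_prop) s

theorem tmean_deriv_t (hr : ∀ᵐ x ∂ν, ‖x‖ ≤ r) {h : EuclideanSpace ℝ (Fin n) → ℝ}
    (hh : Continuous h) (t : ℝ) (y : EuclideanSpace ℝ (Fin n)) :
    HasDerivAt (fun s : ℝ => tmean ν h s y)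
      (tmean ν (fun x => h x * (-‖x‖ ^ 2 / 2)) t y -
        tmean ν h t y * tmean ν (fun x => -‖x‖ ^ 2 / 2) t y) t := by
  have e : ∀ s : ℝ, tiltFn s y = fun x => ⟪y, x⟫ + s * (-‖x‖ ^ 2 / 2) := by
    intro s; ext x
    simp only [tiltFn]; ring
  simp only [tmean, e]
  exact hasDerivAt_tilt hr hh (by fun_prop) (by fun_prop) t

theorem tilt_prob (hr : ∀ᵐ x ∂ν, ‖x‖ ≤ r) (t : ℝ) (y : EuclideanSpace ℝ (Fin n)) :
    IsProbabilityMeasure (ν.tilted (tiltFn t y)) :=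
  isProbabilityMeasure_tilted (integrable_of_bdd_supp hr (by unfold tiltFn; fun_prop))

theorem tilt_supp (hr : ∀ᵐ x ∂ν, ‖x‖ ≤ r) (t : ℝ) (y : EuclideanSpace ℝ (Fin n)) :
    ∀ᵐ x ∂(ν.tilted (tiltFn t y)), ‖x‖ ≤ r :=
  (tilted_absolutelyContinuous ν _).ae_le hr

theorem tmean_continuous (hr : ∀ᵐ x ∂ν, ‖x‖ ≤ r) {h : EuclideanSpace ℝ (Fin n) → ℝ}
    (hh : Continuous h) :
    Continuous fun p : ℝ × EuclideanSpace ℝ (Fin n) => tmean ν h p.1 p.2 := by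
  have hres : ν.restrict (Metric.closedBall 0 r) = ν :=
    Measure.restrict_eq_self_of_ae_mem (by filter_upwards [hr] with x hx; simpa using hx)
  have key : ∀ h : EuclideanSpace ℝ (Fin n) → ℝ, Continuous h →
      Continuous fun p : ℝ × EuclideanSpace ℝ (Fin n) => ∫ x, h x * Real.exp (tiltFn p.1 p.2 x) ∂ν := by
    intro h hh
    rw [← hres]
    refine continuous_parametric_integral_of_continuous
      (f := fun (p : ℝ × EuclideanSpace ℝ (Fin n)) x => h x * Real.exp (tiltFn p.1 p.2 x)) ?_
      (isCompact_closedBall _ _)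
    unfold tiltFn Function.uncurry
    fun_prop
  unfold tmean
  simp only [integral_tilted_div]
  refine (key h hh).div (key _ continuous_const) fun p => (expInt_pos hr ?_).ne'
  unfold tiltFn; fun_prop

theorem tmean_zero (h : EuclideanSpace ℝ (Fin n) → ℝ) : tmean ν h 0 0 = ∫ x, h x ∂ν := by
  unfold tmean
  have : tiltFn (0:ℝ) (0 : EuclideanSpace ℝ (Fin n)) = 0 := by ext x; simp [tiltFn]
  rw [this, tilted_zero]

/-- Twice differentiability along coordinate lines, with drift `a`. -/
def JL (a : Fin n → ℝ) (F : ℝ → EuclideanSpace ℝ (Fin n) → ℝ) (t : ℝ) (y : EuclideanSpace ℝ (Fin n))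
    (g : Fin n → ℝ) (c : ℝ) : Prop :=
  ∃ (ft : ℝ) (q : Fin n → ℝ) (g' : Fin n → ℝ → ℝ), HasDerivAt (fun s => F s y) ft t ∧
    (∀ i s, HasDerivAt (fun s : ℝ => F t (y + s • ebasis i)) (g' i s) s) ∧
    (∀ i, g' i 0 = g i) ∧ (∀ i, HasDerivAt (g' i) (q i) 0) ∧
    c = ft + ∑ i, a i * g i + (1/2) * ∑ i, q i

variable {a : Fin n → ℝ} {F G : ℝ → EuclideanSpace ℝ (Fin n) → ℝ} {t : ℝ}
  {y : EuclideanSpace ℝ (Fin n)} {g g₁ : Fin n → ℝ} {c d : ℝ}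

theorem JL.add (h : JL a F t y g c) (k : JL a G t y g₁ d) :
    JL a (fun t y => F t y + G t y) t y (fun i => g i + g₁ i) (c + d) := by
  obtain ⟨ft, q, g', h1, h2, h3, h4, h5⟩ := h
  obtain ⟨ft', q', g'', k1, k2, k3, k4, k5⟩ := k
  refine ⟨ft + ft', fun i => q i + q' i, fun i s => g' i s + g'' i s, h1.add k1,
    fun i s => (h2 i s).add (k2 i s), fun i => by simp [h3, k3], fun i => (h4 i).add (k4 i), ?_⟩
  simp only [mul_add, Finset.sum_add_distrib, h5, k5]; ring

theorem JL.mul (h : JL a F t y g c) (k : JL a G t y g₁ d) :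
    JL a (fun t y => F t y * G t y) t y (fun i => g i * G t y + F t y * g₁ i)
      (c * G t y + F t y * d + ∑ i, g i * g₁ i) := by
  obtain ⟨ft, q, g', h1, h2, h3, h4, h5⟩ := h
  obtain ⟨ft', q', g'', k1, k2, k3, k4, k5⟩ := k
  refine ⟨ft * G t y + F t y * ft', fun i => (q i * G t y + g i * g₁ i) + (g i * g₁ i + F t y * q' i),
    fun i s => g' i s * G t (y + s • ebasis i) + F t (y + s • ebasis i) * g'' i s, h1.mul k1,
    fun i s => (h2 i s).mul (k2 i s), fun i => by simp [h3, k3], fun i => ?_, ?_⟩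
  · have e1 := ((h4 i).mul (k2 i 0)).add ((h2 i 0).mul (k4 i))
    refine e1.congr_deriv ?_
    simp [h3, k3]
  · simp only [h5, k5, Finset.mul_sum, Finset.sum_mul, mul_add, add_mul, Finset.sum_add_distrib]
    have e1 : ∀ i, a i * (g i * G t y) = a i * g i * G t y := fun i => by ring
    have e2 : ∀ i, a i * (F t y * g₁ i) = F t y * (a i * g₁ i) := fun i => by ring
    have e3 : ∀ i, 1/2 * (q i * G t y) = 1/2 * q i * G t y := fun i => by ring
    have e4 : ∀ i, 1/2 * (F t y * q' i) = F t y * (1/2 * q' i) := fun i => by ring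
    simp only [e1, e2, e3, e4, ← Finset.mul_sum]
    ring

theorem JL.time {u : ℝ → ℝ} {u' : ℝ} (hu : HasDerivAt u u' t) :
    JL a (fun t _ => u t) t y (fun _ => 0) u' := by
  refine ⟨u', fun _ => 0, fun _ _ => 0, hu, fun i s => hasDerivAt_const _ _, fun _ => rfl,
    fun i => hasDerivAt_const _ _, by simp⟩

theorem JL.sub (h : JL a F t y g c) (k : JL a G t y g₁ d) :
    JL a (fun t y => F t y - G t y) t y (fun i => g i - g₁ i) (c - d) := by
  obtain ⟨ft, q, g', h1, h2, h3, h4, h5⟩ := h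
  obtain ⟨ft', q', g'', k1, k2, k3, k4, k5⟩ := k
  refine ⟨ft - ft', fun i => q i - q' i, fun i s => g' i s - g'' i s, h1.sub k1,
    fun i s => (h2 i s).sub (k2 i s), fun i => by simp [h3, k3], fun i => (h4 i).sub (k4 i), ?_⟩
  simp only [mul_sub, Finset.sum_sub_distrib, h5, k5]; ring

theorem JL.sum {ι : Type*} {F : ι → ℝ → EuclideanSpace ℝ (Fin n) → ℝ} {g : ι → Fin n → ℝ} {c : ι → ℝ}
    (s : Finset ι) (h : ∀ j, JL a (F j) t y (g j) (c j)) :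
    JL a (fun t y => ∑ j ∈ s, F j t y) t y (fun i => ∑ j ∈ s, g j i) (∑ j ∈ s, c j) := by
  classical
  induction s using Finset.induction_on with
  | empty => simpa using JL.time (a := a) (y := y) (hasDerivAt_const t (0:ℝ))
  | insert j s hj ih => simp only [Finset.sum_insert hj]; exact (h j).add ih

theorem JL.normsq : JL a (fun _ y => ‖y‖ ^ 2) t y (fun i => 2 * y i) (2 * ∑ i, a i * y i + n) := by
  have e : ∀ i (s : ℝ), ‖y + s • ebasis i‖ ^ 2 = ‖y‖ ^ 2 + s * (2 * y i) + s ^ 2 := by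
    intro i s
    rw [norm_add_sq_real, inner_smul_right, EuclideanSpace.inner_single_right, norm_smul, mul_pow]
    simp; ring
  refine ⟨0, fun _ => 2, fun i s => 2 * y i + 2 * s, hasDerivAt_const _ _, fun i s => ?_,
    fun i => by simp, fun i => ?_, ?_⟩
  · simp only [e]
    have := (((hasDerivAt_id s).mul_const (2 * y i)).const_add (‖y‖ ^ 2)).add (hasDerivAt_pow 2 s)
    exact this.congr_deriv (by simp)
  · simpa using ((hasDerivAt_id (0:ℝ)).const_mul 2).const_add (2 * y i)
  · simp only [Finset.sum_const, Finset.card_univ, Fintype.card_fin, nsmul_eq_mul, Finset.mul_sum]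
    have : ∀ i, a i * (2 * y i) = 2 * (a i * y i) := fun i => by ring
    simp only [this]; ring

theorem tmean_add (hr : ∀ᵐ x ∂ν, ‖x‖ ≤ r) {h k : EuclideanSpace ℝ (Fin n) → ℝ}
    (hh : Continuous h) (hk : Continuous k) (t : ℝ) (y : EuclideanSpace ℝ (Fin n)) :
    tmean ν (fun x => h x + k x) t y = tmean ν h t y + tmean ν k t y := by
  have := tilt_prob hr t y
  exact integral_add (integrable_of_bdd_supp (tilt_supp hr t y) hh)
    (integrable_of_bdd_supp (tilt_supp hr t y) hk)

theorem tmean_const_mul (h : EuclideanSpace ℝ (Fin n) → ℝ) (b : ℝ)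
    (t : ℝ) (y : EuclideanSpace ℝ (Fin n)) :
    tmean ν (fun x => b * h x) t y = b * tmean ν h t y := integral_const_mul _ _

theorem tmean_sum (hr : ∀ᵐ x ∂ν, ‖x‖ ≤ r) {ι : Type*} [Fintype ι] {h : ι → EuclideanSpace ℝ (Fin n) → ℝ}
    (hh : ∀ i, Continuous (h i)) (t : ℝ) (y : EuclideanSpace ℝ (Fin n)) :
    tmean ν (fun x => ∑ i, h i x) t y = ∑ i, tmean ν (h i) t y := by
  have := tilt_prob hr t y
  exact integral_finsetSum _ fun i _ => (integrable_of_bdd_supp (tilt_supp hr t y) (hh i))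

theorem JL.ofMean (hr : ∀ᵐ x ∂ν, ‖x‖ ≤ r) {h : EuclideanSpace ℝ (Fin n) → ℝ} (hh : Continuous h)
    (t : ℝ) (y : EuclideanSpace ℝ (Fin n)) :
    JL (fun i => tmean ν (fun x => x i) t y) (tmean ν h) t y
      (fun i => tmean ν (fun x => h x * x i) t y - tmean ν h t y * tmean ν (fun x => x i) t y) 0 := by
  refine ⟨_, _, fun i s => tmean ν (fun x => h x * x i) t (y + s • ebasis i) -
        tmean ν h t (y + s • ebasis i) * tmean ν (fun x => x i) t (y + s • ebasis i),
      tmean_deriv_t hr hh t y, fun i s => tmean_deriv_y hr hh t y i s, fun i => by simp,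
      fun i => (tmean_deriv_y hr (h := fun x => h x * x i) (by fun_prop) t y i 0).sub
        ((tmean_deriv_y hr hh t y i 0).mul (tmean_deriv_y hr (h := fun x => x i) (by fun_prop) t y i 0)), ?_⟩
  have e1 : tmean ν (fun x => h x * (-‖x‖ ^ 2 / 2)) t y
      = (-1/2) * ∑ i, tmean ν (fun x => h x * x i * x i) t y := by
    rw [← tmean_sum hr (fun i => by fun_prop), ← tmean_const_mul]
    congr 1; ext x
    rw [EuclideanSpace.real_norm_sq_eq, Finset.mul_sum, ← Finset.sum_neg_distrib, Finset.sum_div, Finset.mul_sum]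
    exact Finset.sum_congr rfl fun i _ => by ring
  have e2 : tmean ν (fun x => (-‖x‖ ^ 2 / 2)) t y
      = (-1/2) * ∑ i, tmean ν (fun x => x i * x i) t y := by
    rw [← tmean_sum hr (fun i => by fun_prop), ← tmean_const_mul]
    congr 1; ext x
    rw [EuclideanSpace.real_norm_sq_eq, ← Finset.sum_neg_distrib, Finset.sum_div, Finset.mul_sum]
    exact Finset.sum_congr rfl fun i _ => by ring
  rw [e1, e2]
  simp only [zero_smul, add_zero, Finset.mul_sum, ← Finset.sum_sub_distrib, ← Finset.sum_add_distrib]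
  symm
  refine Finset.sum_eq_zero fun i _ => ?_
  ring

theorem deriv_nonpos_of_right_max {f : ℝ → ℝ} {f' t : ℝ} (hf : HasDerivAt f f' t)
    (h : ∀ᶠ s in nhdsWithin t (Set.Ioi t), f s ≤ f t) : f' ≤ 0 := by
  have h1 := (hasDerivAt_iff_tendsto_slope.mp hf).mono_left
    (nhdsWithin_mono t (show Set.Ioi t ⊆ {t}ᶜ from fun x hx => (ne_of_gt hx)))
  refine le_of_tendsto h1 ?_
  filter_upwards [h, self_mem_nhdsWithin] with s hs hst
  rw [slope_def_field]
  exact div_nonpos_of_nonpos_of_nonneg (by linarith) (by have : t < s := hst; linarith)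

theorem second_deriv_nonpos {f g : ℝ → ℝ} {q : ℝ} (hf : ∀ s, HasDerivAt f (g s) s)
    (hg : HasDerivAt g q 0) (h : IsLocalMax f 0) : g 0 = 0 ∧ q ≤ 0 := by
  have h0 : g 0 = 0 := h.hasDerivAt_eq_zero (hf 0)
  refine ⟨h0, ?_⟩
  by_contra hq
  push Not at hq
  have h1 : ∀ᶠ s in nhdsWithin (0:ℝ) (Set.Ioi 0), 0 < g s := by
    have h1 := (hasDerivAt_iff_tendsto_slope.mp hg).mono_left
      (nhdsWithin_mono (0:ℝ) (show Set.Ioi (0:ℝ) ⊆ {0}ᶜ from fun x hx => (ne_of_gt hx)))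
    filter_upwards [h1.eventually (lt_mem_nhds hq), self_mem_nhdsWithin] with s hs hst
    rw [slope_def_field, h0] at hs
    have hst' : 0 < s := hst
    simp only [sub_zero] at hs
    exact (div_pos_iff_of_pos_right hst').mp hs
  obtain ⟨e, he, hpos⟩ := mem_nhdsGT_iff_exists_Ioo_subset.mp h1
  have h2 : ∀ᶠ s in nhdsWithin (0:ℝ) (Set.Ioi 0), f s ≤ f 0 := h.filter_mono nhdsWithin_le_nhds
  obtain ⟨e', he', hle⟩ := mem_nhdsGT_iff_exists_Ioo_subset.mp h2
  have he0 : (0:ℝ) < e := he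
  have he0' : (0:ℝ) < e' := he'
  set s := min e e' / 2 with hs
  have hs0 : 0 < s := by positivity
  have hse : s < e := by have := min_le_left e e'; have : 0 < min e e' := by positivity
                         linarith
  have hse' : s < e' := by have := min_le_right e e'; have : 0 < min e e' := by positivity
                           linarith
  have hmono : StrictMonoOn f (Set.Icc 0 s) := by
    refine strictMonoOn_of_deriv_pos (convex_Icc _ _)
      (fun x _ => (hf x).continuousAt.continuousWithinAt) fun x hx => ?_
    rw [interior_Icc] at hx
    rw [(hf x).deriv]
    exact hpos ⟨hx.1, hx.2.trans hse⟩
  have := hmono ⟨le_rfl, hs0.le⟩ ⟨hs0.le, le_rfl⟩ hs0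
  have h3 : f s ≤ f 0 := hle ⟨hs0, hse'⟩
  linarith

theorem JL.max_nonpos (h : JL a F t y g c)
    (ht : ∀ᶠ s in nhdsWithin t (Set.Ioi t), F s y ≤ F t y)
    (hy : ∀ i, ∀ᶠ s in nhds (0:ℝ), F t (y + s • ebasis i) ≤ F t y) : c ≤ 0 := by
  obtain ⟨ft, q, g', h1, h2, h3, h4, h5⟩ := h
  have hft := deriv_nonpos_of_right_max h1 ht
  have key : ∀ i, g' i 0 = 0 ∧ q i ≤ 0 := fun i =>
    second_deriv_nonpos (h2 i) (h4 i) (by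
      have := hy i
      unfold IsLocalMax IsMaxFilter
      simpa using this)
  have : ∀ i, g i = 0 := fun i => by rw [← h3, (key i).1]
  have h6 : ∑ i, q i ≤ 0 := Finset.sum_nonpos fun i _ => (key i).2
  rw [h5]; simp only [this, mul_zero, Finset.sum_const_zero]
  linarith

end Calculus


section ThinShell

set_option linter.unusedSectionVars false

variable {n : ℕ} {r : ℝ}

theorem cov_center {μ : Measure (EuclideanSpace ℝ (Fin n))} [IsProbabilityMeasure μ]
    (hr : ∀ᵐ x ∂μ, ‖x‖ ≤ r) {h k : EuclideanSpace ℝ (Fin n) → ℝ}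
    (hh : Continuous h) (hk : Continuous k) (a b : ℝ) (ha : a = ∫ x, h x ∂μ) (hb : b = ∫ x, k x ∂μ) :
    (∫ x, h x * k x ∂μ) - a * b = ∫ x, (h x - a) * (k x - b) ∂μ := by
  have e : ∀ x, (h x - a) * (k x - b) = h x * k x + ((-b) * h x + ((-a) * k x + a * b)) := by
    intro x; ring
  simp only [e]
  rw [integral_add, integral_add, integral_add, integral_const_mul, integral_const_mul, ← ha, ← hb]
  · simp; ring
  all_goals exact integrable_of_bdd_supp hr (by fun_prop)

theorem third_center {μ : Measure (EuclideanSpace ℝ (Fin n))} [IsProbabilityMeasure μ]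
    (hr : ∀ᵐ x ∂μ, ‖x‖ ≤ r) {h k l : EuclideanSpace ℝ (Fin n) → ℝ}
    (hh : Continuous h) (hk : Continuous k) (hl : Continuous l) (a b c : ℝ) (ha : a = ∫ x, h x ∂μ)
    (hb : b = ∫ x, k x ∂μ) (hc : c = ∫ x, l x ∂μ) :
    ∫ x, (h x - a) * (k x - b) * (l x - c) ∂μ =
      (∫ x, h x * k x * l x ∂μ) - (∫ x, h x * k x ∂μ) * c
        - (((∫ x, h x * l x ∂μ) - a * c) * b + a * ((∫ x, k x * l x ∂μ) - b * c)) := by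
  have e : ∀ x, (h x - a) * (k x - b) * (l x - c) = h x * k x * l x + ((-c) * (h x * k x) +
      ((-b) * (h x * l x) + ((-a) * (k x * l x) + ((b * c) * h x + ((a * c) * k x +
      ((a * b) * l x + (-(a * b * c)))))))) := by
    intro x; ring
  simp only [e]
  rw [integral_add, integral_add, integral_add, integral_add, integral_add, integral_add, integral_add]
  · simp only [integral_const_mul, ← ha, ← hb, ← hc]
    simp; ring
  all_goals exact integrable_of_bdd_supp hr (by fun_prop)

variable {ν : Measure (EuclideanSpace ℝ (Fin n))} [IsProbabilityMeasure ν]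

/-- coordinate mean -/
def mi (ν : Measure (EuclideanSpace ℝ (Fin n))) (i : Fin n) (t : ℝ) (y : EuclideanSpace ℝ (Fin n)) : ℝ :=
  tmean ν (fun x => x i) t y

/-- covariance entries -/
def Aij (ν : Measure (EuclideanSpace ℝ (Fin n))) (i j : Fin n) (t : ℝ) (y : EuclideanSpace ℝ (Fin n)) : ℝ :=
  tmean ν (fun x => x i * x j) t y - mi ν i t y * mi ν j t y

/-- squared Hilbert-Schmidt norm of the covariance -/
def SS (ν : Measure (EuclideanSpace ℝ (Fin n))) (t : ℝ) (y : EuclideanSpace ℝ (Fin n)) : ℝ :=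
  ∑ i, ∑ j, Aij ν i j t y * Aij ν i j t y

/-- variance of the norm -/
def VV (ν : Measure (EuclideanSpace ℝ (Fin n))) (t : ℝ) (y : EuclideanSpace ℝ (Fin n)) : ℝ :=
  tmean ν (fun x => ‖x‖ * ‖x‖) t y - tmean ν (fun x => ‖x‖) t y * tmean ν (fun x => ‖x‖) t y

/-- numerical constant -/
def CC : ℝ := 162 * 324 ^ 2

theorem JL.congr {a g g₁ : Fin n → ℝ} {F : ℝ → EuclideanSpace ℝ (Fin n) → ℝ} {t : ℝ}
    {y : EuclideanSpace ℝ (Fin n)} {c d : ℝ} (h : JL a F t y g c) (hg : ∀ i, g i = g₁ i) (hc : c = d) :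
    JL a F t y g₁ d := by
  have : g = g₁ := funext hg
  subst this; subst hc; exact h

theorem JL.ofSS (hr : ∀ᵐ x ∂ν, ‖x‖ ≤ r) (hlc : LCm 0 ν) {t : ℝ} (ht : 0 ≤ t)
    (y : EuclideanSpace ℝ (Fin n)) :
    ∃ g c, JL (fun i => mi ν i t y) (SS ν) t y g c ∧ c ≤ CC * √(SS ν t y) ^ 3 := by
  have hx : ∀ i : Fin n, Continuous fun x : EuclideanSpace ℝ (Fin n) => x i := fun i => by fun_prop
  have hp := tilt_prob hr t y
  have hs := tilt_supp hr t y
  have hl := (hlc.tilted t y).zero_of_nonneg ht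
  set μ := ν.tilted (tiltFn t y) with hμ
  set z : Fin n → EuclideanSpace ℝ (Fin n) → ℝ := fun i x => x i - mi ν i t y with hz
  have hzc : ∀ i, Continuous (z i) := fun i => by simp only [hz]; fun_prop
  have hcv : ∀ i j, Aij ν i j t y = ∫ x, z i x * z j x ∂μ := fun i j =>
    cov_center hs (hx i) (hx j) _ _ rfl rfl
  have hA : ∀ i j, JL (fun i => mi ν i t y) (Aij ν i j) t y
      (fun k => ∫ x, z i x * z j x * z k x ∂μ) (-∑ k, Aij ν i k t y * Aij ν j k t y) := fun i j =>
    ((JL.ofMean hr (h := fun x => x i * x j) (by fun_prop) t y).sub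
      ((JL.ofMean hr (hx i) t y).mul (JL.ofMean hr (hx j) t y))).congr
      (fun k => (third_center hs (hx i) (hx j) (hx k) _ _ _ rfl rfl rfl).symm)
      (by simp only [Aij, mi]; ring)
  have hS := JL.sum (Finset.univ : Finset (Fin n)) fun i =>
    JL.sum (Finset.univ : Finset (Fin n)) fun j => (hA i j).mul (hA i j)
  refine ⟨_, _, hS, ?_⟩
  have H1 : ∀ a : Fin n → ℝ, ∫ x, (∑ i, a i * z i x) ^ 4 ∂μ ≤
      CC * (∫ x, (∑ i, a i * z i x) ^ 2 ∂μ) ^ 2 := by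
    intro a
    have := lc_fourth hl hs (WithLp.toLp 2 a) (∑ i, a i * mi ν i t y)
    have e : ∀ x : EuclideanSpace ℝ (Fin n), ⟪WithLp.toLp 2 a, x⟫ - ∑ i, a i * mi ν i t y
        = ∑ i, a i * z i x := by
      intro x
      simp only [PiLp.inner_apply, hz, ← Finset.sum_sub_distrib]
      refine Finset.sum_congr rfl fun i _ => ?_
      simp; ring
    simp only [e] at this
    exact this
  have hT := third_moment hs hzc (C0 := CC) (by unfold CC; norm_num) H1 hcv
  have hC := cov_cubic hs hzc hcv
  have eS : SS ν t y = ∑ i, ∑ j, Aij ν i j t y ^ 2 := by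
    unfold SS; simp only [sq]
  rw [eS]
  refine le_trans ?_ hT
  have e1 : ∀ i j, -(∑ k, Aij ν i k t y * Aij ν j k t y) * Aij ν i j t y +
      Aij ν i j t y * -(∑ k, Aij ν i k t y * Aij ν j k t y) +
      ∑ k, (∫ x, z i x * z j x * z k x ∂μ) * (∫ x, z i x * z j x * z k x ∂μ) =
      -2 * (Aij ν i j t y * ∑ k, Aij ν i k t y * Aij ν j k t y) +
      ∑ k, (∫ x, z i x * z j x * z k x ∂μ) ^ 2 := by
    intro i j; simp only [sq]; ring
  simp only [e1, Finset.sum_add_distrib, ← Finset.mul_sum]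
  linarith

theorem JL.ofVV (hr : ∀ᵐ x ∂ν, ‖x‖ ≤ r) (t : ℝ) (y : EuclideanSpace ℝ (Fin n)) :
    ∃ g c, JL (fun i => mi ν i t y) (VV ν) t y g c ∧ - (√(SS ν t y) * VV ν t y) ≤ c := by
  have hx : ∀ i : Fin n, Continuous fun x : EuclideanSpace ℝ (Fin n) => x i := fun i => by fun_prop
  have hp := tilt_prob hr t y
  have hs := tilt_supp hr t y
  set μ := ν.tilted (tiltFn t y) with hμ
  set z : Fin n → EuclideanSpace ℝ (Fin n) → ℝ := fun i x => x i - mi ν i t y with hz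
  have hzc : ∀ i, Continuous (z i) := fun i => by simp only [hz]; fun_prop
  have hcv : ∀ i j, Aij ν i j t y = ∫ x, z i x * z j x ∂μ := fun i j =>
    cov_center hs (hx i) (hx j) _ _ rfl rfl
  have hφ : Continuous fun x : EuclideanSpace ℝ (Fin n) => ‖x‖ := continuous_norm
  set φ : EuclideanSpace ℝ (Fin n) → ℝ := fun x => ‖x‖ - tmean ν (fun x => ‖x‖) t y with hφd
  have hφc : Continuous φ := by simp only [hφd]; fun_prop
  have hV := (JL.ofMean hr (h := fun x => ‖x‖ * ‖x‖) (by fun_prop) t y).sub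
      ((JL.ofMean hr hφ t y).mul (JL.ofMean hr hφ t y))
  refine ⟨_, _, hV, ?_⟩
  have hL := cov_lip hs hzc hφc hcv
  have eS : SS ν t y = ∑ i, ∑ j, Aij ν i j t y ^ 2 := by
    unfold SS; simp only [sq]
  have eV : VV ν t y = ∫ x, φ x ^ 2 ∂μ := by
    simp only [sq]
    exact cov_center hs hφ hφ _ _ rfl rfl
  rw [eS, eV]
  have e2 : ∀ i, tmean ν (fun x => ‖x‖ * x i) t y - tmean ν (fun x => ‖x‖) t y * tmean ν (fun x => x i) t y
      = ∫ x, z i x * φ x ∂μ := by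
    intro i
    have := cov_center hs hφ (hx i) _ _ rfl rfl
    refine this.trans ?_
    congr 1; ext x; simp only [hz, hφd, mi]; exact mul_comm _ _
  simp only [e2, zero_mul, mul_zero, zero_add, zero_sub, ← sq]
  linarith

theorem VV_le (hr : ∀ᵐ x ∂ν, ‖x‖ ≤ r) (hlc : LCm 0 ν) {t : ℝ} (ht : 0 < t)
    (y : EuclideanSpace ℝ (Fin n)) : VV ν t y ≤ 4 / t := by
  have hp := tilt_prob hr t y
  have := lc_var ht (hlc.tilted t y) (tilt_supp hr t y)
  rw [le_div_iff₀ ht]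
  unfold VV tmean
  simp only [sq] at this
  linarith

theorem abs_tmean_le (hr : ∀ᵐ x ∂ν, ‖x‖ ≤ r) {h : EuclideanSpace ℝ (Fin n) → ℝ} {B : ℝ}
    (hB : ∀ x, ‖x‖ ≤ r → |h x| ≤ B) (t : ℝ) (y : EuclideanSpace ℝ (Fin n)) : |tmean ν h t y| ≤ B := by
  have hp := tilt_prob hr t y
  have := norm_integral_le_of_norm_le_const (μ := ν.tilted (tiltFn t y)) (f := h) (C := B) (by
    filter_upwards [tilt_supp hr t y] with x hx using hB x hx)
  simpa [tmean] using this

theorem VV_bdd (hr : ∀ᵐ x ∂ν, ‖x‖ ≤ r) (t : ℝ) (y : EuclideanSpace ℝ (Fin n)) : VV ν t y ≤ r ^ 2 := by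
  have := abs_tmean_le hr (h := fun x => ‖x‖ * ‖x‖) (B := r ^ 2) (fun x hx => by
    rw [abs_of_nonneg (by positivity), sq]; exact mul_self_le_mul_self (norm_nonneg x) hx) t y
  unfold VV
  nlinarith [le_abs_self (tmean ν (fun x => ‖x‖ * ‖x‖) t y), mul_self_nonneg (tmean ν (fun x => ‖x‖) t y)]

theorem SS_nonneg (t : ℝ) (y : EuclideanSpace ℝ (Fin n)) : 0 ≤ SS ν t y :=
  Finset.sum_nonneg fun _ _ => Finset.sum_nonneg fun _ _ => mul_self_nonneg _

theorem SS_bdd (hr : ∀ᵐ x ∂ν, ‖x‖ ≤ r) : ∃ B, ∀ t y, SS ν t y ≤ B := by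
  have hc : ∀ (x : EuclideanSpace ℝ (Fin n)) i, |x i| ≤ ‖x‖ := fun x i => PiLp.norm_apply_le x i
  have hA : ∀ i j t y, |Aij ν i j t y| ≤ r ^ 2 + r ^ 2 := by
    intro i j t y
    have h1 := abs_tmean_le hr (h := fun x => x i * x j) (B := r ^ 2) (fun x hx => by
      rw [abs_mul, sq]; gcongr
      · exact (abs_nonneg _).trans ((hc x j).trans hx)
      · exact (hc x i).trans hx
      · exact (hc x j).trans hx) t y
    have h2 := abs_tmean_le hr (h := fun x => x i) (B := r) (fun x hx => (hc x i).trans hx) t y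
    have h3 := abs_tmean_le hr (h := fun x => x j) (B := r) (fun x hx => (hc x j).trans hx) t y
    unfold Aij mi
    refine (abs_sub _ _).trans (add_le_add h1 ?_)
    rw [abs_mul, sq]
    exact mul_le_mul h2 h3 (abs_nonneg _) ((abs_nonneg _).trans h2)
  refine ⟨∑ _i : Fin n, ∑ _j : Fin n, (r ^ 2 + r ^ 2) * (r ^ 2 + r ^ 2), fun t y => ?_⟩
  refine Finset.sum_le_sum fun i _ => Finset.sum_le_sum fun j _ => ?_
  rw [← abs_mul_abs_self]
  exact mul_le_mul (hA i j t y) (hA i j t y) (abs_nonneg _) (by positivity)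

theorem mi_dot_le (hr : ∀ᵐ x ∂ν, ‖x‖ ≤ r) (t : ℝ) (y : EuclideanSpace ℝ (Fin n)) :
    ∑ i, mi ν i t y * y i ≤ r * ‖y‖ := by
  have e : ∑ i, mi ν i t y * y i = tmean ν (fun x => ⟪y, x⟫) t y := by
    have : ∀ x : EuclideanSpace ℝ (Fin n), ⟪y, x⟫ = ∑ i, y i * x i := fun x => by
      simp [PiLp.inner_apply, mul_comm]
    simp only [this]
    rw [tmean_sum hr (fun i => by fun_prop)]
    refine Finset.sum_congr rfl fun i _ => ?_
    rw [tmean_const_mul, mul_comm]; rfl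
  rw [e]
  refine (le_abs_self _).trans (abs_tmean_le hr (fun x hx => ?_) t y)
  refine (abs_real_inner_le_norm _ _).trans ?_
  rw [mul_comm]; gcongr

theorem SS_continuous (hr : ∀ᵐ x ∂ν, ‖x‖ ≤ r) :
    Continuous fun p : ℝ × EuclideanSpace ℝ (Fin n) => SS ν p.1 p.2 := by
  have hA : ∀ i j, Continuous fun p : ℝ × EuclideanSpace ℝ (Fin n) => Aij ν i j p.1 p.2 := by
    intro i j
    have h1 := tmean_continuous hr (h := fun x => x i * x j) (by fun_prop)
    have h2 := tmean_continuous hr (h := fun x => x i) (by fun_prop)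
    have h3 := tmean_continuous hr (h := fun x => x j) (by fun_prop)
    unfold Aij mi
    exact h1.sub (h2.mul h3)
  unfold SS
  exact continuous_finsetSum _ fun i _ => continuous_finsetSum _ fun j _ => (hA i j).mul (hA i j)

theorem VV_continuous (hr : ∀ᵐ x ∂ν, ‖x‖ ≤ r) :
    Continuous fun p : ℝ × EuclideanSpace ℝ (Fin n) => VV ν p.1 p.2 := by
  have h1 := tmean_continuous hr (h := fun x => ‖x‖ * ‖x‖) (by fun_prop)
  have h2 := tmean_continuous hr (h := fun x => ‖x‖) (by fun_prop)
  unfold VV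
  exact h1.sub (h2.mul h2)

end ThinShell


section MaxPrinciple

variable {n : ℕ} {r : ℝ} {ν : Measure (EuclideanSpace ℝ (Fin n))} [IsProbabilityMeasure ν]

/-- numerical constant -/
def kk : ℝ := CC / 2 + 2

theorem kk_pos : 0 < kk := by unfold kk CC; norm_num

theorem arith_core {R V S e cV cS t T D : ℝ} (hR : 0 < R) (hRe : R ^ 2 = S + e) (ht : 0 ≤ t) (hT : 0 < T)
    (htR : t * R ≤ 1 / (2 * kk)) (hV : -(R * V) ≤ cV) (hS : cS ≤ CC * R ^ 3) (hD : D ≤ 8 / T) :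
    -(R * (V - (16 * kk * (R - kk * t * R ^ 2) + D))) ≤
      cV - (-(16 * kk * kk) * S + (16 * kk * (1 / (2 * R)) - 16 * kk * kk * t) * cS
        + (-(16 * kk * kk) * e - 4 / T ^ 2)) := by
  have hk := kk_pos
  have hkR : kk * (t * R) ≤ 1 / 2 := by
    calc kk * (t * R) ≤ kk * (1 / (2 * kk)) := by gcongr
      _ = 1 / 2 := by field_simp
  have hP0 : 0 ≤ 1 / (2 * R) - kk * t := by
    have : 1 / (2 * R) - kk * t = (1 / 2 - kk * (t * R)) / R := by field_simp
    rw [this]; exact div_nonneg (by linarith) hR.le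
  have h1 : (1 / (2 * R) - kk * t) * cS ≤ CC * R ^ 2 / 2 := by
    have hCC : 0 < CC := by unfold CC; norm_num
    calc (1 / (2 * R) - kk * t) * cS ≤ (1 / (2 * R) - kk * t) * (CC * R ^ 3) := by gcongr
      _ ≤ (1 / (2 * R)) * (CC * R ^ 3) := by
        have : 0 ≤ kk * t := by positivity
        gcongr; linarith
      _ = CC * R ^ 2 / 2 := by field_simp
  have h2 : 8 / T * R ≤ 4 * R ^ 2 + 4 / T ^ 2 := by
    have : 0 ≤ (2 * R - 2 / T) ^ 2 := sq_nonneg _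
    have e1 : (2 * R - 2 / T) ^ 2 = 4 * R ^ 2 + 4 / T ^ 2 - 8 / T * R := by field_simp; ring
    linarith
  have h3 : R * D ≤ 8 / T * R := by rw [mul_comm]; gcongr
  have h4 : 0 ≤ kk * t * R ^ 2 * R * (16 * kk) := by positivity
  have hkk : kk = CC / 2 + 2 := rfl
  have h5 : 16 * kk * ((1 / (2 * R) - kk * t) * cS) ≤ 16 * kk * (CC * R ^ 2 / 2) := by gcongr
  have h6 : 4 * R ^ 2 ≤ 16 * kk * R ^ 2 := by
    have : 4 ≤ 16 * kk := by unfold kk CC; norm_num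
    gcongr
  have h7 : 16 * kk * (CC * R ^ 2 / 2) = 16 * kk * kk * R ^ 2 - 2 * (16 * kk * R ^ 2) := by
    have : CC = 2 * kk - 4 := by rw [hkk]; ring
    rw [this]; ring
  have h8 : 16 * kk * kk * R ^ 2 = 16 * kk * kk * S + 16 * kk * kk * e := by rw [hRe]; ring
  nlinarith

theorem fin_arith {l E1 W X K E2 N Q R : ℝ} (f1 : 0 ≤ E1 * ((l - R) * W)) (f2 : E1 * (-(R * W)) ≤ E1 * X)
    (f4 : 0 < E2 * (K * N - Q)) (hc : l * E1 * W + E1 * X - (-K * E2 * N + E2 * Q) ≤ 0) : False := by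
  nlinarith

set_option maxHeartbeats 800000 in
theorem max_core (hr : ∀ᵐ x ∂ν, ‖x‖ ≤ r) (hlc : LCm 0 ν) {T e : ℝ} (hT : 0 < T) (he : 0 < e) :
    VV ν 0 0 ≤ 16 * kk * √(SS ν 0 0 + e) + 8 / T := by
  have hk := kk_pos
  have hr0 : 0 ≤ r := by
    obtain ⟨x, hx⟩ := hr.exists
    exact (norm_nonneg x).trans hx
  obtain ⟨B, hB⟩ := SS_bdd hr
  set lam := √(B + e) with hlam
  set K := r + n + 1 with hK
  set RR : ℝ → EuclideanSpace ℝ (Fin n) → ℝ := fun t y => √(SS ν t y + e) with hRR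
  have hSe : ∀ t y, 0 < SS ν t y + e := fun t y => by have := SS_nonneg (ν := ν) t y; linarith
  have hRpos : ∀ t y, 0 < RR t y := fun t y => Real.sqrt_pos.mpr (hSe t y)
  have hRsq : ∀ t y, RR t y ^ 2 = SS ν t y + e := fun t y => Real.sq_sqrt (hSe t y).le
  have hRlam : ∀ t y, RR t y ≤ lam := fun t y => Real.sqrt_le_sqrt (by linarith [hB t y])
  set D : ℝ → ℝ := fun t => 4 / T * (2 - t / T) with hD
  set W : ℝ → EuclideanSpace ℝ (Fin n) → ℝ := fun t y =>
    VV ν t y - (16 * kk * (RR t y - kk * t * RR t y ^ 2) + D t) with hW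
  by_contra hcon
  push Not at hcon
  have hW0 : 0 < W 0 0 := by
    simp only [hW, hD]
    have : RR 0 0 = √(SS ν 0 0 + e) := rfl
    rw [this]
    have e8 : 4 / T * (2 - 0 / T) = 8 / T := by simp; ring
    rw [e8]; simp only [mul_zero, zero_mul, sub_zero]; linarith
  set η := W 0 0 / 2 with hη
  have hη0 : 0 < η := by positivity
  set Φ : ℝ → EuclideanSpace ℝ (Fin n) → ℝ := fun t y =>
    Real.exp (lam * t) * W t y - η * Real.exp (-K * t) * (1 + ‖y‖ ^ 2) with hΦ
  have hΦ0 : 0 < Φ 0 0 := by simp [hΦ]; linarith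
  have cS := SS_continuous hr
  have cV := VV_continuous hr
  have cR : Continuous fun p : ℝ × EuclideanSpace ℝ (Fin n) => RR p.1 p.2 := by
    simp only [hRR]; fun_prop
  have cRt : ∀ y, Continuous fun s : ℝ => RR s y := fun y => by
    have := Continuous.comp (g := fun p : ℝ × EuclideanSpace ℝ (Fin n) => RR p.1 p.2)
      (f := fun s : ℝ => (s, y)) cR (by fun_prop)
    exact this
  have cRy : ∀ t y i, Continuous fun s : ℝ => RR t (y + s • ebasis i) := fun t y i => by
    have := Continuous.comp (g := fun p : ℝ × EuclideanSpace ℝ (Fin n) => RR p.1 p.2)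
      (f := fun s : ℝ => (t, y + s • ebasis i)) cR (by fun_prop)
    exact this
  clear_value RR
  have cΦ : Continuous fun p : ℝ × EuclideanSpace ℝ (Fin n) => Φ p.1 p.2 := by
    simp only [hΦ, hW, hD]; fun_prop
  -- domain
  set Dom : Set (ℝ × EuclideanSpace ℝ (Fin n)) :=
    {p | 0 ≤ p.1 ∧ p.1 ≤ T ∧ p.1 * RR p.1 p.2 ≤ 1 / (2 * kk)} with hDom
  have hDomC : IsClosed Dom := by
    refine IsClosed.inter (isClosed_le continuous_const continuous_fst)
      (IsClosed.inter (isClosed_le continuous_fst continuous_const) (isClosed_le (continuous_fst.mul cR) continuous_const))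
  have hkR : ∀ t y, (t, y) ∈ Dom → kk * t * RR t y ≤ 1 / 2 := by
    intro t y h
    calc kk * t * RR t y = kk * (t * RR t y) := by ring
      _ ≤ kk * (1 / (2 * kk)) := by gcongr; exact h.2.2
      _ = 1 / 2 := by field_simp
  have hG1 : ∀ t y, (t, y) ∈ Dom → 8 * kk * RR t y ≤ 16 * kk * (RR t y - kk * t * RR t y ^ 2) := by
    intro t y h
    have h1 := hkR t y h
    have h2 : kk * t * RR t y ^ 2 ≤ RR t y / 2 := by
      have := mul_le_mul_of_nonneg_right h1 (hRpos t y).le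
      nlinarith
    nlinarith
  have hDlow : ∀ t, t ≤ T → 4 / T ≤ D t := by
    intro t h
    have : t / T ≤ 1 := (div_le_one hT).mpr h
    have h4 : 0 < 4 / T := by positivity
    simp only [hD]; nlinarith
  have hWle : ∀ t y, (t, y) ∈ Dom → W t y ≤ r ^ 2 := by
    intro t y h
    have h1 := VV_bdd hr t y
    have h2 := hG1 t y h
    have h3 := hDlow t h.2.1
    have h4 : 0 < 4 / T := by positivity
    have h5 : 0 < 8 * kk * RR t y := by have := hRpos t y; positivity
    simp only [hW]; linarith
  have hlam0 : 0 ≤ lam := Real.sqrt_nonneg _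
  have hK0 : 0 < K := by positivity
  set ρ := √(Real.exp (lam * T) * r ^ 2 / (η * Real.exp (-K * T))) with hρ
  have hρ2 : ρ ^ 2 * (η * Real.exp (-K * T)) = Real.exp (lam * T) * r ^ 2 := by
    rw [hρ, Real.sq_sqrt (by positivity)]; field_simp
  have hout : ∀ t y, (t, y) ∈ Dom → ρ < ‖y‖ → Φ t y ≤ 0 := by
    intro t y h hy
    have h1 : Real.exp (lam * t) * W t y ≤ Real.exp (lam * T) * r ^ 2 := by
      calc _ ≤ Real.exp (lam * t) * r ^ 2 := by gcongr; exact hWle t y h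
        _ ≤ _ := by gcongr; exact h.2.1
    have h2 : ρ ^ 2 * (η * Real.exp (-K * T)) ≤ η * Real.exp (-K * t) * (1 + ‖y‖ ^ 2) := by
      rw [mul_comm]
      have h3 : ρ ^ 2 ≤ 1 + ‖y‖ ^ 2 := by
        have : ρ ^ 2 ≤ ‖y‖ ^ 2 := by gcongr
        linarith
      have h4 : -K * T ≤ -K * t := by nlinarith [h.2.1]
      gcongr
    simp only [hΦ]; linarith
  have h00 : ((0:ℝ), (0 : EuclideanSpace ℝ (Fin n))) ∈ Dom := by
    refine ⟨le_rfl, hT.le, ?_⟩; simp; positivity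
  have hcomp : IsCompact (Dom ∩ (Set.Icc 0 T ×ˢ Metric.closedBall (0 : EuclideanSpace ℝ (Fin n)) ρ)) :=
    (isCompact_Icc.prod (isCompact_closedBall _ _)).inter_left hDomC
  obtain ⟨⟨t0, y0⟩, hp0, hmax⟩ := hcomp.exists_isMaxOn
    ⟨((0:ℝ), (0 : EuclideanSpace ℝ (Fin n))), h00, ⟨le_rfl, hT.le⟩, by simp [hρ]⟩ cΦ.continuousOn
  have hp0D := hp0.1
  have hΦpos : 0 < Φ t0 y0 := lt_of_lt_of_le hΦ0
    (hmax (a := ((0:ℝ), (0 : EuclideanSpace ℝ (Fin n)))) ⟨h00, ⟨le_rfl, hT.le⟩, by simp [hρ]⟩)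
  have hall : ∀ t y, (t, y) ∈ Dom → Φ t y ≤ Φ t0 y0 := by
    intro t y h
    by_cases hy : ‖y‖ ≤ ρ
    · exact hmax (a := (t, y)) ⟨h, ⟨h.1, h.2.1⟩, by simpa using hy⟩
    · exact (hout t y h (not_le.mp hy)).trans hΦpos.le
  have hWpos : 0 < W t0 y0 := by
    have h1 : 0 < Real.exp (lam * t0) * W t0 y0 := by
      have : 0 ≤ η * Real.exp (-K * t0) * (1 + ‖y0‖ ^ 2) := by positivity
      simp only [hΦ] at hΦpos; linarith
    exact (mul_pos_iff_of_pos_left (Real.exp_pos _)).mp h1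
  have ht00 : 0 ≤ t0 := hp0D.1
  have hRp := hRpos t0 y0
  have htT : t0 < T := by
    refine lt_of_le_of_ne hp0D.2.1 fun h => ?_
    have h1 := VV_le hr hlc (h ▸ hT : 0 < t0) y0
    have h2 := hG1 t0 y0 hp0D
    have h3 := hDlow t0 hp0D.2.1
    have h5 : 0 < 8 * kk * RR t0 y0 := by positivity
    rw [h] at h1
    simp only [hW] at hWpos
    rw [h] at hWpos h2 h3 h5
    linarith
  have htR : t0 * RR t0 y0 < 1 / (2 * kk) := by
    refine lt_of_le_of_ne hp0D.2.2 fun h => ?_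
    have ht0 : 0 < t0 := by
      rcases ht00.lt_or_eq with h' | h'
      · exact h'
      · rw [← h', zero_mul] at h
        have : 0 < 1 / (2 * kk) := by positivity
        linarith
    have h1 := VV_le hr hlc ht0 y0
    have h2 := hG1 t0 y0 hp0D
    have h3 := hDlow t0 hp0D.2.1
    have h4 : 0 < 4 / T := by positivity
    have h5 : 8 * kk * RR t0 y0 = 4 / t0 := by
      field_simp at h ⊢; linarith
    simp only [hW] at hWpos
    linarith
  -- linearisation
  set R0 := RR t0 y0 with hR0
  set Φl : ℝ → EuclideanSpace ℝ (Fin n) → ℝ := fun t y =>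
    Real.exp (lam * t) * (VV ν t y - ((16 * kk * (1 / (2 * R0)) - 16 * kk * kk * t) * SS ν t y +
      ((16 * kk * (1 / (2 * R0)) - 16 * kk * kk * t) * e + 16 * kk * (R0 / 2) + 4 / T * (2 - t / T))))
      - η * Real.exp (-K * t) * (1 + ‖y‖ ^ 2) with hΦl
  have hlin : ∀ t y, Φl t y ≤ Φ t y := by
    intro t y
    simp only [hΦl, hΦ, hW, hD]
    refine sub_le_sub_right (mul_le_mul_of_nonneg_left (sub_le_sub_left ?_ _) (Real.exp_pos _).le) _
    have h1 : RR t y ≤ (RR t y ^ 2 + R0 ^ 2) / (2 * R0) := by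
      rw [le_div_iff₀ (by positivity)]; nlinarith [sq_nonneg (RR t y - R0)]
    have h2 : (RR t y ^ 2 + R0 ^ 2) / (2 * R0) = (1 / (2 * R0)) * (SS ν t y + e) + R0 / 2 := by
      rw [hRsq]; field_simp
    rw [h2] at h1
    have h3 : 16 * kk * RR t y ≤ 16 * kk * ((1 / (2 * R0)) * (SS ν t y + e) + R0 / 2) := by gcongr
    rw [mul_sub, hRsq]
    nlinarith
  have hlin0 : Φl t0 y0 = Φ t0 y0 := by
    have hsq : R0 ^ 2 = SS ν t0 y0 + e := hRsq t0 y0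
    have h2 : 16 * kk * R0 = 16 * kk * ((1 / (2 * R0)) * (SS ν t0 y0 + e) + R0 / 2) := by
      rw [← hsq]; field_simp; ring
    simp only [hΦl, hΦ, hW, hD]
    linear_combination Real.exp (lam * t0) * h2 - Real.exp (lam * t0) * 16 * kk * kk * t0 * hsq
  -- local maximum
  have hmt : ∀ᶠ s in nhdsWithin t0 (Set.Ioi t0), Φl s y0 ≤ Φl t0 y0 := by
    have c1 : Continuous fun s : ℝ => s * RR s y0 :=
      continuous_id.mul (cRt y0)
    have ev1 : ∀ᶠ s in nhds t0, s * RR s y0 < 1 / (2 * kk) :=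
      c1.continuousAt.eventually (gt_mem_nhds htR)
    have ev2 : ∀ᶠ s in nhds t0, s < T := gt_mem_nhds htT
    filter_upwards [nhdsWithin_le_nhds ev1, nhdsWithin_le_nhds ev2, self_mem_nhdsWithin] with s h1 h2 h3
    have h3' : t0 < s := h3
    rw [hlin0]
    exact (hlin s y0).trans (hall s y0 ⟨by linarith, h2.le, h1.le⟩)
  have hmy : ∀ i, ∀ᶠ s in nhds (0:ℝ), Φl t0 (y0 + s • ebasis i) ≤ Φl t0 y0 := by
    intro i
    have c1 : Continuous fun s : ℝ => t0 * RR t0 (y0 + s • ebasis i) :=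
      continuous_const.mul (cRy t0 y0 i)
    have ev1 : ∀ᶠ s in nhds (0:ℝ), t0 * RR t0 (y0 + s • ebasis i) < 1 / (2 * kk) :=
      c1.continuousAt.eventually (gt_mem_nhds (by simpa using htR))
    filter_upwards [ev1] with s h1
    rw [hlin0]
    exact (hlin t0 _).trans (hall t0 _ ⟨ht00, htT.le, h1.le⟩)
  -- generator
  obtain ⟨gS, cS', hJS, hcS⟩ := JL.ofSS hr hlc ht00 y0
  obtain ⟨gV, cV', hJV, hcV⟩ := JL.ofVV hr t0 y0
  have d1 : HasDerivAt (fun t => Real.exp (lam * t)) (lam * Real.exp (lam * t0)) t0 := by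
    have := ((hasDerivAt_id t0).const_mul lam).exp
    exact this.congr_deriv (by simp; ring)
  have d2 : HasDerivAt (fun t => η * Real.exp (-K * t)) (-K * (η * Real.exp (-K * t0))) t0 := by
    have := (((hasDerivAt_id t0).const_mul (-K)).exp).const_mul η
    exact this.congr_deriv (by simp; ring)
  have d3 : HasDerivAt (fun t => 16 * kk * (1 / (2 * R0)) - 16 * kk * kk * t) (-(16 * kk * kk)) t0 := by
    have := ((hasDerivAt_id t0).const_mul (16 * kk * kk)).const_sub (16 * kk * (1 / (2 * R0)))
    exact this.congr_deriv (by simp)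
  have d4 : HasDerivAt (fun t => (16 * kk * (1 / (2 * R0)) - 16 * kk * kk * t) * e + 16 * kk * (R0 / 2)
      + 4 / T * (2 - t / T)) (-(16 * kk * kk) * e - 4 / T ^ 2) t0 := by
    have := ((d3.mul_const e).add_const (16 * kk * (R0 / 2))).add
      ((((hasDerivAt_id t0).div_const T).const_sub 2).const_mul (4 / T))
    exact this.congr_deriv (by field_simp; ring)
  have hJ := ((JL.time d1).mul (hJV.sub (((JL.time d3).mul hJS).add (JL.time d4)))).sub
    ((JL.time d2).mul ((JL.time (hasDerivAt_const t0 (1:ℝ))).add JL.normsq))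
  have hc := JL.max_nonpos (F := Φl) hJ hmt hmy
  simp only [zero_mul, Finset.sum_const_zero, add_zero, zero_add] at hc
  have hWlin : (VV ν t0 y0 - ((16 * kk * (1 / (2 * R0)) - 16 * kk * kk * t0) * SS ν t0 y0 +
      ((16 * kk * (1 / (2 * R0)) - 16 * kk * kk * t0) * e + 16 * kk * (R0 / 2) + 4 / T * (2 - t0 / T))))
      = W t0 y0 := by
    simp only [hΦl, hΦ] at hlin0
    have := sub_left_injective hlin0
    exact mul_left_cancel₀ (Real.exp_pos _).ne' this
  rw [hWlin] at hc
  have hSR : √(SS ν t0 y0) ≤ R0 := by rw [hR0, hRR]; exact Real.sqrt_le_sqrt (by linarith)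
  have hVnn : 0 ≤ VV ν t0 y0 := by
    have h2 := hG1 t0 y0 hp0D
    have h3 := hDlow t0 hp0D.2.1
    have h4 : 0 < 4 / T := by positivity
    have h5 : 0 < 8 * kk * RR t0 y0 := by positivity
    simp only [hW] at hWpos
    linarith
  have hCC : 0 < CC := by unfold CC; norm_num
  have hDle : D t0 ≤ 8 / T := by
    have : 0 ≤ t0 / T := by positivity
    have h4 : 0 < 4 / T := by positivity
    have h8 : 8 / T = 4 / T * 2 := by ring
    simp only [hD]; rw [h8]; gcongr; linarith
  have hcore := arith_core (R := R0) (V := VV ν t0 y0) (S := SS ν t0 y0) (e := e) (cV := cV') (cS := cS')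
    (t := t0) (T := T) (D := D t0) hRp (hRsq t0 y0) ht00 hT htR.le
    (by
      refine le_trans ?_ hcV
      have := mul_le_mul_of_nonneg_right hSR hVnn
      linarith)
    (hcS.trans (by gcongr)) hDle
  have hWeq : VV ν t0 y0 - (16 * kk * (R0 - kk * t0 * R0 ^ 2) + D t0) = W t0 y0 := rfl
  rw [hWeq] at hcore
  have hdot := mi_dot_le hr t0 y0
  have hE1 := Real.exp_pos (lam * t0)
  have hE2 : 0 < η * Real.exp (-K * t0) := by positivity
  have f1 : 0 ≤ Real.exp (lam * t0) * ((lam - R0) * W t0 y0) := by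
    have := hRlam t0 y0
    have h0 : 0 ≤ lam - R0 := by linarith
    positivity
  have f2 := mul_le_mul_of_nonneg_left hcore hE1.le
  have f3 : 0 < K * (1 + ‖y0‖ ^ 2) - (2 * ∑ i, mi ν i t0 y0 * y0 i + n) := by
    have h1 : 2 * (r * ‖y0‖) ≤ r * (1 + ‖y0‖ ^ 2) := by
      have : 2 * ‖y0‖ ≤ 1 + ‖y0‖ ^ 2 := by linarith [sq_nonneg (‖y0‖ - 1), sub_sq ‖y0‖ 1]
      have := mul_le_mul_of_nonneg_left this hr0
      linarith
    have h2 : (0:ℝ) ≤ n * ‖y0‖ ^ 2 := by positivity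
    have h3 : (0:ℝ) ≤ ‖y0‖ ^ 2 := by positivity
    rw [hK]; linarith
  have f4 := mul_pos hE2 f3
  exact fin_arith f1 f2 f4 hc

end MaxPrinciple


theorem thinshell_bdd {n : ℕ} {r : ℝ} {ν : Measure (EuclideanSpace ℝ (Fin n))} [IsProbabilityMeasure ν]
    (hr : ∀ᵐ x ∂ν, ‖x‖ ≤ r) (hlc : LCm 0 ν) : VV ν 0 0 ≤ 16 * kk * √(SS ν 0 0) := by
  have h1 : Filter.Tendsto (fun e : ℝ => 16 * kk * √(SS ν 0 0 + e) + 8 * e) (nhdsWithin 0 (Set.Ioi 0))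
      (nhds (16 * kk * √(SS ν 0 0 + 0) + 8 * 0)) := by
    have : Continuous (fun e : ℝ => 16 * kk * √(SS ν 0 0 + e) + 8 * e) := by fun_prop
    exact (this.tendsto 0).mono_left nhdsWithin_le_nhds
  simp only [add_zero, mul_zero] at h1
  refine ge_of_tendsto h1 ?_
  filter_upwards [self_mem_nhdsWithin] with e he
  have he' : 0 < e := he
  have := max_core hr hlc (T := 1 / e) (by positivity) he'
  simpa using this

theorem VV_zero_eq {n : ℕ} (ν : Measure (EuclideanSpace ℝ (Fin n))) [IsProbabilityMeasure ν] :
    VV ν 0 0 = (∫ x, ‖x‖ * ‖x‖ ∂ν) - (∫ x, ‖x‖ ∂ν) * (∫ x, ‖x‖ ∂ν) := by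
  simp only [VV, tmean_zero]

theorem SS_zero_eq {n : ℕ} (ν : Measure (EuclideanSpace ℝ (Fin n))) [IsProbabilityMeasure ν] :
    SS ν 0 0 = ∑ i, ∑ j, ((∫ x, x i * x j ∂ν) - (∫ x, x i ∂ν) * (∫ x, x j ∂ν)) *
      ((∫ x, x i * x j ∂ν) - (∫ x, x i ∂ν) * (∫ x, x j ∂ν)) := by
  simp only [SS, Aij, mi, tmean_zero]

theorem thinshell_lc {n : ℕ} {μ : Measure (EuclideanSpace ℝ (Fin n))} [IsProbabilityMeasure μ]
    (hlc : LCm 0 μ) (hIsq : Integrable (fun x => ‖x‖ ^ 2) μ) : VV μ 0 0 ≤ 16 * kk * √(SS μ 0 0) := by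
  set Bn : ℕ → Set (EuclideanSpace ℝ (Fin n)) := fun N => Metric.closedBall 0 (N:ℝ) with hBn
  have hBm : ∀ N, MeasurableSet (Bn N) := fun N => Metric.isClosed_closedBall.measurableSet
  have hmono : Monotone Bn := fun a b hab => Metric.closedBall_subset_closedBall (by exact_mod_cast hab)
  have hU : ⋃ N, Bn N = Set.univ := by
    refine Set.eq_univ_of_forall fun x => Set.mem_iUnion.mpr ?_
    obtain ⟨N, hN⟩ := exists_nat_ge ‖x‖
    exact ⟨N, by simpa [hBn] using hN⟩
  have hset : ∀ h : EuclideanSpace ℝ (Fin n) → ℝ, Integrable h μ →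
      Filter.Tendsto (fun N => ∫ x in Bn N, h x ∂μ) Filter.atTop (nhds (∫ x, h x ∂μ)) := by
    intro h hh
    have := tendsto_setIntegral_of_monotone (μ := μ) (f := h) hBm hmono hh.integrableOn
    rwa [hU, setIntegral_univ] at this
  have hmass : Filter.Tendsto (fun N => μ.real (Bn N)) Filter.atTop (nhds 1) := by
    have := hset (fun _ => 1) (integrable_const _)
    simpa using this
  set ν : ℕ → Measure (EuclideanSpace ℝ (Fin n)) := fun N => (μ (Bn N))⁻¹ • μ.restrict (Bn N) with hν
  have hlim : ∀ h : EuclideanSpace ℝ (Fin n) → ℝ, Integrable h μ →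
      Filter.Tendsto (fun N => ∫ x, h x ∂(ν N)) Filter.atTop (nhds (∫ x, h x ∂μ)) := by
    intro h hh
    have h1 := (hmass.inv₀ one_ne_zero).mul (hset h hh)
    simp only [inv_one, one_mul] at h1
    refine h1.congr fun N => ?_
    simp only [hν, integral_smul_measure, ENNReal.toReal_inv, smul_eq_mul]
    rfl
  have hn1 : Integrable (fun x : EuclideanSpace ℝ (Fin n) => ‖x‖) μ := by
    have : MemLp (fun x : EuclideanSpace ℝ (Fin n) => ‖x‖) 2 μ :=
      (memLp_two_iff_integrable_sq (by fun_prop)).mpr hIsq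
    exact this.integrable (by norm_num)
  have hn2 : Integrable (fun x : EuclideanSpace ℝ (Fin n) => ‖x‖ * ‖x‖) μ := by simpa only [sq] using hIsq
  have hcoord : ∀ (x : EuclideanSpace ℝ (Fin n)) i, |x i| ≤ ‖x‖ := fun x i => PiLp.norm_apply_le x i
  have hx1 : ∀ i, Integrable (fun x : EuclideanSpace ℝ (Fin n) => x i) μ := fun i =>
    hn1.mono' (Continuous.aestronglyMeasurable (by fun_prop)) (Filter.Eventually.of_forall fun x => hcoord x i)
  have hx2 : ∀ i j, Integrable (fun x : EuclideanSpace ℝ (Fin n) => x i * x j) μ := fun i j =>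
    hn2.mono' (Continuous.aestronglyMeasurable (by fun_prop)) (Filter.Eventually.of_forall fun x => by
      rw [norm_mul]; exact mul_le_mul (hcoord x i) (hcoord x j) (norm_nonneg _) (norm_nonneg _))
  have hpos : ∀ᶠ N in Filter.atTop, IsProbabilityMeasure (ν N) := by
    filter_upwards [hmass.eventually (lt_mem_nhds zero_lt_one)] with N hN
    have h0 : μ (Bn N) ≠ 0 := by
      intro h; simp [Measure.real, h] at hN
    constructor
    simp only [hν, Measure.smul_apply, Measure.restrict_apply MeasurableSet.univ, Set.univ_inter, smul_eq_mul]
    exact ENNReal.inv_mul_cancel h0 (measure_ne_top _ _)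
  have hineq : ∀ᶠ N in Filter.atTop, (∫ x, ‖x‖ * ‖x‖ ∂(ν N)) - (∫ x, ‖x‖ ∂(ν N)) * (∫ x, ‖x‖ ∂(ν N)) ≤
      16 * kk * √(∑ i, ∑ j, ((∫ x, x i * x j ∂(ν N)) - (∫ x, x i ∂(ν N)) * (∫ x, x j ∂(ν N))) *
      ((∫ x, x i * x j ∂(ν N)) - (∫ x, x i ∂(ν N)) * (∫ x, x j ∂(ν N)))) := by
    filter_upwards [hpos] with N hN
    rw [← VV_zero_eq, ← SS_zero_eq]
    refine thinshell_bdd (r := N) ?_ ((hlc.restrict (hBm N) (convex_closedBall _ _)).smul _)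
    refine Measure.ae_smul_measure ?_ _
    filter_upwards [ae_restrict_mem (hBm N)] with x hx
    simpa [hBn] using hx
  rw [VV_zero_eq, SS_zero_eq]
  refine le_of_tendsto_of_tendsto ((hlim _ hn2).sub ((hlim _ hn1).mul (hlim _ hn1))) ?_ hineq
  refine Filter.Tendsto.const_mul _ (Filter.Tendsto.sqrt ?_)
  refine tendsto_finsetSum _ fun i _ => tendsto_finsetSum _ fun j _ => ?_
  have := (hlim _ (hx2 i j)).sub ((hlim _ (hx1 i)).mul (hlim _ (hx1 j)))
  exact this.mul this

theorem lcm_of_density {n : ℕ} {f : EuclideanSpace ℝ (Fin n) → ℝ} (hf : IsLogConcaveFn f) :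
    LCm 0 (volume.withDensity fun x => ENNReal.ofReal (f x)) := by
  obtain ⟨hf0, hf1⟩ := hf
  set K : Set (EuclideanSpace ℝ (Fin n)) := {x | 0 < f x} with hK
  have key : ∀ x ∈ K, ∀ y ∈ K, ∀ a b : ℝ, 0 ≤ a → 0 ≤ b → a + b = 1 →
      0 < f (a • x + b • y) ∧ a * Real.log (f x) + b * Real.log (f y) ≤ Real.log (f (a • x + b • y)) := by
    intro x hx y hy a b ha hb hab
    have hx' : 0 < f x := hx
    have hy' : 0 < f y := hy
    have h1 := hf1 x y a ha (by linarith)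
    have hb' : 1 - a = b := by linarith
    rw [hb'] at h1
    have hp : 0 < f x ^ a * f y ^ b := mul_pos (Real.rpow_pos_of_pos hx' _) (Real.rpow_pos_of_pos hy' _)
    refine ⟨hp.trans_le h1, ?_⟩
    have := Real.log_le_log hp h1
    rwa [Real.log_mul (Real.rpow_pos_of_pos hx' _).ne' (Real.rpow_pos_of_pos hy' _).ne',
      Real.log_rpow hx', Real.log_rpow hy'] at this
  have hKc : Convex ℝ K := fun x hx y hy a b ha hb hab => (key x hx y hy a b ha hb hab).1
  have hconc : ConcaveOn ℝ K (fun x => Real.log (f x)) :=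
    ⟨hKc, fun x hx y hy a b ha hb hab => (key x hx y hy a b ha hb hab).2⟩
  have hcont : ContinuousOn f (interior K) := by
    have h1 := (Real.continuous_exp.comp_continuousOn hconc.continuousOn_interior)
    refine h1.congr fun x hx => ?_
    have hxK : x ∈ K := interior_subset hx
    have : 0 < f x := hxK
    simp [Real.exp_log this]
  set w : EuclideanSpace ℝ (Fin n) → ℝ≥0∞ := (interior K).indicator fun x => ENNReal.ofReal (f x) with hw
  have hwm : Measurable w := by
    classical
    have h1 : ContinuousOn (fun x => ENNReal.ofReal (f x)) (interior K) :=
      ENNReal.continuous_ofReal.comp_continuousOn hcont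
    have := h1.measurable_piecewise (g := fun _ => 0) continuousOn_const isOpen_interior.measurableSet
    rw [hw, ← Set.piecewise_eq_indicator]
    exact this
  have hae : (fun x => ENNReal.ofReal (f x)) =ᵐ[volume] w := by
    have h0 : volume (frontier K) = 0 := hKc.addHaar_frontier volume
    have h1 : ∀ᵐ x ∂(volume : Measure (EuclideanSpace ℝ (Fin n))), x ∉ frontier K :=
      measure_eq_zero_iff_ae_notMem.mp h0
    filter_upwards [h1] with x hx
    by_cases hi : x ∈ interior K
    · simp [hw, hi]
    · have hxK : x ∉ K := fun h => hx ⟨subset_closure h, hi⟩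
      have : f x = 0 := le_antisymm (not_lt.mp hxK) (hf0 x)
      simp [hw, hi, this]
  rw [withDensity_congr_ae hae]
  refine LCm.withDensity hwm fun x y => ?_
  by_cases hx : x ∈ interior K
  · by_cases hy : y ∈ interior K
    · have hm : (1/2 : ℝ) • (x + y) ∈ interior K := by
        have := hKc.interior hx hy (show (0:ℝ) ≤ 1/2 by norm_num) (show (0:ℝ) ≤ 1/2 by norm_num) (by norm_num)
        rwa [smul_add]
      simp only [hw, Set.indicator_of_mem hx, Set.indicator_of_mem hy, Set.indicator_of_mem hm]
      rw [← ENNReal.ofReal_mul (hf0 x), ← ENNReal.ofReal_pow (hf0 _)]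
      refine ENNReal.ofReal_le_ofReal ?_
      have h1 := hf1 x y (1/2) (by norm_num) (by norm_num)
      have e : (1:ℝ) - 1/2 = 1/2 := by norm_num
      rw [e, ← smul_add] at h1
      have h2 : f x * f y = (f x ^ (1/2:ℝ) * f y ^ (1/2:ℝ)) ^ 2 := by
        rw [mul_pow, ← Real.sqrt_eq_rpow, ← Real.sqrt_eq_rpow, Real.sq_sqrt (hf0 x), Real.sq_sqrt (hf0 y)]
      rw [h2]
      have := mul_nonneg (Real.rpow_nonneg (hf0 x) (1/2)) (Real.rpow_nonneg (hf0 y) (1/2))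
      gcongr
    · simp [hw, hy]
  · simp [hw, hx]


theorem mApp_coord {n : ℕ} (A : Matrix (Fin n) (Fin n) ℝ) (x : EuclideanSpace ℝ (Fin n)) (i : Fin n) :
    mApp A x i = ⟪x, WithLp.toLp 2 (A i)⟫ := by
  simp [mApp, Matrix.toLpLin_apply, Matrix.mulVec, dotProduct, PiLp.inner_apply]

theorem norm_row_sq {n : ℕ} (A : Matrix (Fin n) (Fin n) ℝ) (i : Fin n) :
    ‖(WithLp.toLp 2 (A i) : EuclideanSpace ℝ (Fin n))‖ ^ 2 = ∑ j, A i j ^ 2 := by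
  simp [EuclideanSpace.norm_sq_eq]

theorem var_bounds {n : ℕ} {Ω : Type} [MeasurableSpace Ω] {P : Measure Ω} [IsProbabilityMeasure P]
    {X : Ω → EuclideanSpace ℝ (Fin n)} {f : EuclideanSpace ℝ (Fin n) → ℝ}
    {A : Matrix (Fin n) (Fin n) ℝ} (hd : HasDensityFn P X f) (hf : IsLogConcaveFn f)
    (hi : Isotropic P X) (hA : hsNorm A ^ 2 = n) :
    variance (fun ω => ‖mApp A (X ω)‖) P ≤ n ∧
    variance (fun ω => ‖mApp A (X ω)‖) P ≤ 16 * kk * (opNorm A * √n) := by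
  obtain ⟨hXm, hXd⟩ := hd
  obtain ⟨hi0, hi1⟩ := hi
  set a : Fin n → EuclideanSpace ℝ (Fin n) := fun i => WithLp.toLp 2 (A i) with ha
  have hsum : ∑ i, ‖a i‖ ^ 2 = n := by
    rw [← hA, hsNorm, Real.sq_sqrt (by positivity)]
    exact Finset.sum_congr rfl fun i _ => norm_row_sq A i
  set A' : EuclideanSpace ℝ (Fin n) →L[ℝ] EuclideanSpace ℝ (Fin n) :=
    LinearMap.toContinuousLinearMap (Matrix.toEuclideanLin A) with hA'
  have hAm : ∀ x, A' x = mApp A x := fun x => rfl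
  have hA'm : Measurable A' := A'.continuous.measurable
  -- integrability of X
  have hsq : Integrable (fun ω => ‖X ω‖ ^ 2) P := by
    have h1 : ∀ i : Fin n, Integrable (fun ω => X ω i ^ 2) P := by
      intro i
      have h2 := hi1 (EuclideanSpace.single i 1) (EuclideanSpace.single i 1)
      have h3 : Integrable (fun ω => ⟪X ω, EuclideanSpace.single i (1:ℝ)⟫ * ⟪X ω, EuclideanSpace.single i (1:ℝ)⟫) P := by
        by_contra hc
        rw [integral_undef hc] at h2
        simp [PiLp.inner_apply] at h2
      refine h3.congr (Filter.Eventually.of_forall fun ω => ?_)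
      simp [EuclideanSpace.inner_single_right, sq]
    simp only [EuclideanSpace.norm_sq_eq, Real.norm_eq_abs, sq_abs]
    exact integrable_finsetSum _ fun i _ => h1 i
  have hX2 : MemLp X 2 P := (memLp_two_iff_integrable_sq_norm hXm.aestronglyMeasurable).2 hsq
  have hXi : Integrable X P := hX2.integrable (by norm_num)
  have hY2 : MemLp (fun ω => mApp A (X ω)) 2 P := A'.comp_memLp' hX2
  have hYm : Measurable (fun ω => mApp A (X ω)) := hA'm.comp hXm
  have hN2 : MemLp (fun ω => ‖mApp A (X ω)‖) 2 P := hY2.norm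
  -- the law of AX
  set μ : Measure (EuclideanSpace ℝ (Fin n)) := P.map (fun ω => mApp A (X ω)) with hμ
  have hμp : IsProbabilityMeasure μ := Measure.isProbabilityMeasure_map hYm.aemeasurable
  have hlc : LCm 0 μ := by
    have h1 : μ = (P.map X).map A' := by
      rw [Measure.map_map hA'm hXm]; rfl
    rw [h1, hXd]
    exact (lcm_of_density hf).map A'
  have hmapI : ∀ g : EuclideanSpace ℝ (Fin n) → ℝ, Continuous g →
      ∫ x, g x ∂μ = ∫ ω, g (mApp A (X ω)) ∂P := fun g hg =>
    integral_map hYm.aemeasurable hg.aestronglyMeasurable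
  have hIsq : Integrable (fun x => ‖x‖ ^ 2) μ := by
    rw [hμ, integrable_map_measure (by fun_prop) hYm.aemeasurable]
    exact hN2.integrable_sq
  have hmean : ∀ i, ∫ ω, mApp A (X ω) i ∂P = 0 := by
    intro i
    have : ∀ ω, mApp A (X ω) i = ⟪a i, X ω⟫ := fun ω => by
      rw [mApp_coord, real_inner_comm]
    simp only [this]
    rw [integral_inner hXi, hi0, inner_zero_right]
  have hcov : ∀ i j, ∫ ω, mApp A (X ω) i * mApp A (X ω) j ∂P = ⟪a i, a j⟫ := by
    intro i j
    simp only [mApp_coord]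
    exact hi1 _ _
  have hcsq : ∀ i, Integrable (fun ω => mApp A (X ω) i * mApp A (X ω) i) P := by
    intro i
    refine (hN2.integrable_sq).mono' (by
      have : Measurable fun ω => mApp A (X ω) i := by
        have h := (EuclideanSpace.proj (𝕜 := ℝ) i).continuous.measurable.comp hYm
        exact h
      exact (this.mul this).aestronglyMeasurable) (Filter.Eventually.of_forall fun ω => ?_)
    have h := PiLp.norm_apply_le (mApp A (X ω)) i
    rw [norm_mul, ← sq]
    gcongr
  have hE2 : ∫ ω, ‖mApp A (X ω)‖ ^ 2 ∂P = n := by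
    have : ∀ ω, ‖mApp A (X ω)‖ ^ 2 = ∑ i, mApp A (X ω) i * mApp A (X ω) i := fun ω => by
      simp only [EuclideanSpace.norm_sq_eq, Real.norm_eq_abs, sq_abs]
      simp only [sq]
    simp only [this]
    rw [integral_finsetSum _ fun i _ => hcsq i, ← hsum]
    refine Finset.sum_congr rfl fun i _ => ?_
    rw [hcov, real_inner_self_eq_norm_sq]
  have hvar := variance_eq_sub hN2
  have hvar' : variance (fun ω => ‖mApp A (X ω)‖) P =
      (∫ ω, ‖mApp A (X ω)‖ ^ 2 ∂P) - (∫ ω, ‖mApp A (X ω)‖ ∂P) ^ 2 := hvar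
  refine ⟨?_, ?_⟩
  · rw [hvar', hE2]
    linarith [sq_nonneg (∫ ω, ‖mApp A (X ω)‖ ∂P)]
  · have h1 := thinshell_lc hlc hIsq
    have h2 : variance (fun ω => ‖mApp A (X ω)‖) P = VV μ 0 0 := by
      rw [VV_zero_eq, hmapI _ (by fun_prop), hmapI _ (by fun_prop), hvar']
      simp only [sq]
    have hop0 : 0 ≤ opNorm A := norm_nonneg _
    have h3 : SS μ 0 0 ≤ opNorm A ^ 2 * n := by
      rw [SS_zero_eq]
      have e1 : ∀ i, ∫ x, x i ∂μ = 0 := fun i => by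
        rw [hmapI (fun x => x i) (by fun_prop), hmean]
      have e2 : ∀ i j, ∫ x, x i * x j ∂μ = ⟪a i, a j⟫ := fun i j => by
        rw [hmapI (fun x => x i * x j) (by fun_prop), hcov]
      simp only [e1, e2, mul_zero, sub_zero]
      rw [← hsum, Finset.mul_sum]
      refine Finset.sum_le_sum fun i _ => ?_
      have e3 : ∑ j, ⟪a i, a j⟫ * ⟪a i, a j⟫ = ‖A' (a i)‖ ^ 2 := by
        rw [hAm, EuclideanSpace.norm_sq_eq]
        refine Finset.sum_congr rfl fun j _ => ?_
        rw [mApp_coord, Real.norm_eq_abs, sq_abs, sq]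
      rw [e3, ← mul_pow]
      have := A'.le_opNorm (a i)
      gcongr
      exact this
    rw [h2]
    refine h1.trans ?_
    have hk := kk_pos
    have h4 : √(SS μ 0 0) ≤ opNorm A * √n := by
      refine (Real.sqrt_le_sqrt h3).trans (le_of_eq ?_)
      rw [Real.sqrt_mul (sq_nonneg _), Real.sqrt_sq hop0]
    gcongr

/-- thin-shell estimate for `|AX|` under a ψ_α condition. -/
theorem statement2 :
    ∃ C : ℝ, 0 < C ∧
      ∀ (n : ℕ) (Ω : Type) (_mΩ : MeasurableSpace Ω) (P : Measure Ω),
        IsProbabilityMeasure P →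
        ∀ (X : Ω → EuclideanSpace ℝ (Fin n)) (f : EuclideanSpace ℝ (Fin n) → ℝ)
          (α b : ℝ) (A : Matrix (Fin n) (Fin n) ℝ),
          HasDensityFn P X f → IsLogConcaveFn f → Isotropic P X →
          1 ≤ α → α ≤ 2 → IsPsiAlpha P X α b →
          hsNorm A ^ 2 = n →
          Real.sqrt (variance (fun ω => ‖mApp A (X ω)‖) P) ≤
            C * (n : ℝ) ^ ((1:ℝ)/2) *
              ((n : ℝ) / (opNorm A ^ 2 * b ^ 2)) ^ (-(α / (2 * (2 + α)))) := by
  have hk := kk_pos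
  refine ⟨√(32 * kk) + 1, by positivity, ?_⟩
  intro n Ω _mΩ P hP X f α b A hd hf hi h1 h2 hpsi hA
  obtain ⟨hv1, hv2⟩ := var_bounds hd hf hi hA
  set V := variance (fun ω => ‖mApp A (X ω)‖) P with hV
  set op := opNorm A with hop
  have hop0 : 0 ≤ op := norm_nonneg _
  set β := α / (2 * (2 + α)) with hβ
  set q := (n : ℝ) / (op ^ 2 * b ^ 2) with hq
  have hq0 : 0 ≤ q := by positivity
  have hV0 : 0 ≤ V := variance_nonneg _ _
  rw [← Real.sqrt_eq_rpow]
  rcases hop0.eq_or_lt with ho | ho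
  · have : V = 0 := le_antisymm (by rw [← ho] at hv2; simpa using hv2) hV0
    rw [this, Real.sqrt_zero]
    positivity
  rcases Nat.eq_zero_or_pos n with hn | hn
  · have : V = 0 := le_antisymm (by rw [hn] at hv1; simpa using hv1) hV0
    rw [this, Real.sqrt_zero]
    positivity
  have hn' : (0:ℝ) < n := by exact_mod_cast hn
  have hb : 1 / 2 ≤ b := by
    have h3 := hpsi 2 le_rfl (EuclideanSpace.single ⟨0, hn⟩ 1)
    have h4 := hi.2 (EuclideanSpace.single ⟨0, hn⟩ 1) (EuclideanSpace.single ⟨0, hn⟩ 1)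
    rw [real_inner_self_eq_norm_sq, EuclideanSpace.norm_single] at h4
    simp only [← sq, norm_one, one_pow] at h4
    have h5 : ∀ ω, |⟪X ω, EuclideanSpace.single ⟨0, hn⟩ (1:ℝ)⟫| ^ (2:ℝ) =
      ⟪X ω, EuclideanSpace.single ⟨0, hn⟩ (1:ℝ)⟫ ^ 2 := fun ω => by
      rw [Real.rpow_two, sq_abs]
    simp only [h5] at h3
    rw [h4, Real.one_rpow, mul_one] at h3
    have h6 : (2:ℝ) ^ (1 / α) ≤ 2 := by
      calc (2:ℝ) ^ (1 / α) ≤ 2 ^ (1:ℝ) :=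
            Real.rpow_le_rpow_of_exponent_le (by norm_num) (by rw [div_le_one (by linarith)]; exact h1)
        _ = 2 := Real.rpow_one _
    have h7 : (0:ℝ) < 2 ^ (1 / α) := Real.rpow_pos_of_pos (by norm_num) _
    have hb0 : 0 < b := by
      by_contra hc
      push Not at hc
      nlinarith
    nlinarith
  have hqp : 0 < q := by positivity
  have hβ0 : 0 < β := by positivity
  have hβ4 : β ≤ 1 / 4 := by
    rw [hβ, div_le_iff₀ (by positivity)]; linarith
  have hs0 : 0 < √(32 * kk) := by positivity
  rcases le_total q 1 with hq1 | hq1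
  · have h3 : 1 ≤ q ^ (-β) := Real.one_le_rpow_of_pos_of_le_one_of_nonpos hqp hq1 (by linarith)
    calc √V ≤ √n := Real.sqrt_le_sqrt hv1
      _ = 1 * √n * 1 := by ring
      _ ≤ (√(32 * kk) + 1) * √n * q ^ (-β) := by
        gcongr
        linarith
  · have h3 : q ^ (-(1/4:ℝ)) ≤ q ^ (-β) := Real.rpow_le_rpow_of_exponent_le hq1 (by linarith)
    set x := q ^ (-(1/4:ℝ)) with hx
    have hx0 : 0 < x := Real.rpow_pos_of_pos hqp _
    have hx4 : x ^ 4 = q⁻¹ := by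
      rw [hx, ← Real.rpow_natCast, ← Real.rpow_mul hq0, ← Real.rpow_neg_one]
      norm_num
    have hsn : 0 < √(n:ℝ) := Real.sqrt_pos.2 hn'
    have hsn2 : √(n:ℝ) ^ 2 = n := Real.sq_sqrt hn'.le
    have h5 : op / 2 ≤ x ^ 2 * √n := by
      refine le_of_sq_le_sq ?_ (by positivity)
      have : (x ^ 2 * √n) ^ 2 = op ^ 2 * b ^ 2 := by
        calc (x ^ 2 * √n) ^ 2 = x ^ 4 * √n ^ 2 := by ring
          _ = op ^ 2 * b ^ 2 := by
            rw [hx4, hsn2, hq]; field_simp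
      rw [this]
      have : (1/2:ℝ) ^ 2 ≤ b ^ 2 := by gcongr
      nlinarith [sq_nonneg op]
    have h6 : V ≤ 32 * kk * (√n * x) ^ 2 := by
      refine hv2.trans ?_
      have : op * √n ≤ 2 * (√n * x) ^ 2 := by nlinarith
      nlinarith
    calc √V ≤ √(32 * kk * (√n * x) ^ 2) := Real.sqrt_le_sqrt h6
      _ = √(32 * kk) * √n * x := by
        rw [Real.sqrt_mul (by positivity), Real.sqrt_sq (by positivity)]; ring
      _ ≤ (√(32 * kk) + 1) * √n * q ^ (-β) := by
        gcongr
        linarith
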